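/- arXiv:1812.09083 — 15 statements merged into one kernel-verified Lean document; each statement's English description precedes it below -/
import Mathlib

section
/- Let d ≥ 1 and M ≥ 1, and let ρ⁽¹⁾, …, ρ⁽ᴹ⁾ be density matrices of size d that are pairwise orthogonal (ρ⁽ᵐ⁾ · ρ⁽ⁿ⁾ = 0 for all m ≠ n) and share the same classical version, i.e. there is p : Fin d → ℝ with (ρ⁽ⁿ⁾)ₖₖ = p k for all n and k. Then p k ≤ 1/M for every k. -/
open scoped Matrix ComplexConjugate ComplexOrder

/-!
The sum `S = ∑ n, ρ n` satisfies `S ≤ 1`, so each of its diagonal entries `M * p k` is at most `1`.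
Indeed the eigenvalues of a density matrix are nonnegative and sum to `1`, so `0 ≤ ρ n ≤ 1` and
hence `ρ n * ρ n ≤ ρ n`. Orthogonality kills the cross terms of `S * S`, so these inequalities add
up to `S * S ≤ S`, and therefore `1 - S ≥ 1 - 2 * S + S * S = (1 - S) * (1 - S) ≥ 0`.
-/

section StarOrderedRing

variable {R ι : Type*}

lemma sum_mul_sum_self_of_pairwise_mul_eq_zero [NonUnitalNonAssocSemiring R] {s : Finset ι}
    {a : ι → R} (horth : (s : Set ι).Pairwise fun i j ↦ a i * a j = 0) :
    (∑ i ∈ s, a i) * ∑ i ∈ s, a i = ∑ i ∈ s, a i * a i := by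
  rw [Finset.sum_mul_sum]
  refine Finset.sum_congr rfl fun i hi ↦ ?_
  exact Finset.sum_eq_single_of_mem i hi fun j hj hji ↦ horth hi hj hji.symm

variable [Ring R] [PartialOrder R] [StarRing R] [StarOrderedRing R]

lemma mul_self_le_self_of_nonneg_of_le_one {a : R} (h0 : 0 ≤ a) (h1 : a ≤ 1) : a * a ≤ a := by
  have h1' : 0 ≤ 1 - a := sub_nonneg.mpr h1
  refine sub_nonneg.mp ?_
  calc
    0 ≤ a * (1 - a) * a + (1 - a) * a * (1 - a) :=
      add_nonneg (conjugate_nonneg_of_nonneg h1' h0) (conjugate_nonneg_of_nonneg h0 h1')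
    _ = a - a * a := by noncomm_ring

lemma le_one_of_isSelfAdjoint_of_mul_self_le_self {a : R} (ha : IsSelfAdjoint a) (h : a * a ≤ a) :
    a ≤ 1 := by
  refine sub_nonneg.mp ?_
  calc
    0 ≤ (1 - a) * (1 - a) := ((IsSelfAdjoint.one R).sub ha).mul_self_nonneg
    _ = 1 - a - (a - a * a) := by noncomm_ring
    _ ≤ 1 - a := sub_le_self _ (sub_nonneg.mpr h)

theorem sum_le_one_of_pairwise_mul_eq_zero {s : Finset ι} {a : ι → R}
    (h0 : ∀ i ∈ s, 0 ≤ a i) (h1 : ∀ i ∈ s, a i ≤ 1)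
    (horth : (s : Set ι).Pairwise fun i j ↦ a i * a j = 0) :
    ∑ i ∈ s, a i ≤ 1 := by
  refine le_one_of_isSelfAdjoint_of_mul_self_le_self (.of_nonneg (Finset.sum_nonneg h0)) ?_
  rw [sum_mul_sum_self_of_pairwise_mul_eq_zero horth]
  exact Finset.sum_le_sum fun i hi ↦ mul_self_le_self_of_nonneg_of_le_one (h0 i hi) (h1 i hi)

end StarOrderedRing

section Matrix

open scoped MatrixOrder

variable {𝕜 ι n : Type*} [RCLike 𝕜] [Fintype n] [DecidableEq n]

lemma le_trace_smul_one_of_posSemidef {A : Matrix n n 𝕜} (hA : A.PosSemidef) :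
    A ≤ A.trace • (1 : Matrix n n 𝕜) := by
  have htrace : A.trace • (1 : Matrix n n 𝕜) =
      algebraMap ℝ (Matrix n n 𝕜) (∑ i, hA.isHermitian.eigenvalues i) := by
    rw [hA.isHermitian.trace_eq_sum_eigenvalues, Algebra.algebraMap_eq_smul_one,
      ← RCLike.ofReal_sum, RCLike.real_smul_eq_coe_smul (K := 𝕜)]
  rw [htrace]
  refine le_algebraMap_of_spectrum_le (ha := hA.isHermitian.isSelfAdjoint) fun x hx ↦ ?_
  rw [hA.isHermitian.spectrum_real_eq_range_eigenvalues] at hx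
  obtain ⟨i, rfl⟩ := hx
  exact Finset.single_le_sum (fun j _ ↦ hA.eigenvalues_nonneg j) (Finset.mem_univ i)

theorem stmt_0_general [Fintype ι] {ρ : ι → Matrix n n 𝕜}
    (hpos : ∀ i, (ρ i).PosSemidef) (hle : ∀ i, ρ i ≤ 1)
    (horth : Pairwise fun i j ↦ ρ i * ρ j = 0) (k : n) :
    ∑ i, ρ i k k ≤ 1 := by
  have hsum : ∑ i, ρ i ≤ 1 := sum_le_one_of_pairwise_mul_eq_zero
    (fun i _ ↦ (hpos i).nonneg) (fun i _ ↦ hle i) (horth.set_pairwise _)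
  have hdiag := (Matrix.le_iff.mp hsum).diag_nonneg (i := k)
  simpa only [Matrix.sub_apply, Matrix.one_apply_eq, Matrix.sum_apply, sub_nonneg] using hdiag

end Matrix

theorem stmt_0 (d M : ℕ) (hd : 1 ≤ d) (hM : 1 ≤ M)
    (ρ : Fin M → Matrix (Fin d) (Fin d) ℂ)
    (hpos : ∀ n, (ρ n).PosSemidef)
    (htr : ∀ n, (ρ n).trace = 1)
    (horth : ∀ m n : Fin M, m ≠ n → ρ m * ρ n = 0)
    (p : Fin d → ℝ)
    (hdiag : ∀ (n : Fin M) (k : Fin d), ρ n k k = (p k : ℂ)) :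
    ∀ k : Fin d, p k ≤ 1 / M := by
  intro k
  have hsum : ∑ n, ρ n k k ≤ 1 := stmt_0_general hpos
    (fun n ↦ by simpa only [htr n, one_smul] using le_trace_smul_one_of_posSemidef (hpos n)) horth k
  simp only [hdiag, Finset.sum_const, Finset.card_univ, Fintype.card_fin, nsmul_eq_mul] at hsum
  rw [le_div_iff₀' (by positivity)]
  exact_mod_cast hsum
end

section
/- Let p be a probability vector of dimension d, let 1 ≤ M ≤ d, and suppose p k* = 1/M for some index k*. If there exist M density matrices ρ⁽¹⁾, …, ρ⁽ᴹ⁾ of size d that are pairwise orthogonal (ρ⁽ᵐ⁾ · ρ⁽ⁿ⁾ = 0 for m ≠ n) and all have classical version p (i.e. (ρ⁽ⁿ⁾)ₖₖ = p k for all n, k), then there exist M orthonormal vectors ψ⁽¹⁾, …, ψ⁽ᴹ⁾ in ℂᵈ with |ψ⁽ⁿ⁾ₖ|² = p k for all k and n. -/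
open scoped Matrix ComplexConjugate ComplexOrder

/-!
Let `S = ∑ ρₙ`. The minors `|ρₙ(k, j)|² ≤ ρₙ(k, k) ρₙ(j, j)` sum over `j` to
`(ρₙ²)(k, k) ≤ ρₙ(k, k)`, and orthogonality gives `S² = ∑ ρₙ²`, so `(S²)(k, k) ≤ S(k, k)`.
Conversely `S(k, k)² ≤ (S²)(k, k)`, so `S(k, k) ≥ 1` forces equality in every minor involving `k`.
Hence the `k`-th column of `ρₙ`, once normalized, is a unit vector with the classical version of
`ρₙ`, and columns of orthogonal states are orthogonal.
-/

open RCLike (re)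

section HermitianMatrix

variable {𝕜 ι : Type*} [RCLike 𝕜] {A B : Matrix ι ι 𝕜}

lemma apply_mul_apply_le_of_posSemidef (hA : A.PosSemidef) (i j : ι) :
    A i j * A j i ≤ A i i * A j j := by
  have hminor := (hA.submatrix ![i, j]).det_nonneg
  rw [Matrix.det_fin_two] at hminor
  simpa using hminor

lemma apply_mul_apply_eq_norm_sq (hA : A.IsHermitian) (i j : ι) :
    A i j * A j i = (‖A j i‖ : 𝕜) ^ 2 := by
  rw [← hA.apply i j]
  exact RCLike.conj_mul (A j i)

/-- The `k`-th column of `A` divided by `√(A k k)`, which recovers `ψ` up to a phase when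
`A = ψψᴴ` and `ψ k ≠ 0`. It is zero if `re (A k k) ≤ 0`. -/
noncomputable def normalizedCol (A : Matrix ι ι 𝕜) (k : ι) : ι → 𝕜 :=
  ((√(re (A k k)) : ℝ) : 𝕜)⁻¹ • A.col k

variable [Fintype ι]

lemma mul_self_apply_le_mul_trace (hA : A.PosSemidef) (k : ι) :
    (A * A) k k ≤ A k k * A.trace := by
  rw [Matrix.mul_apply, Matrix.trace, Finset.mul_sum]
  exact Finset.sum_le_sum fun j _ ↦ apply_mul_apply_le_of_posSemidef hA k j

lemma mul_self_apply_eq_mul_trace_iff (hA : A.PosSemidef) (k : ι) :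
    (A * A) k k = A k k * A.trace ↔ ∀ j, A k j * A j k = A k k * A j j := by
  have hminors := Finset.sum_eq_sum_iff_of_le (s := Finset.univ) fun j _ ↦
    apply_mul_apply_le_of_posSemidef hA k j
  simpa only [Matrix.mul_apply, Matrix.trace, Matrix.diag_apply, Finset.mul_sum, Finset.mem_univ,
    forall_const] using hminors

lemma apply_mul_self_le_mul_self_apply (hA : A.IsHermitian) (k : ι) :
    A k k * A k k ≤ (A * A) k k := by
  rw [Matrix.mul_apply]
  refine Finset.single_le_sum (f := fun j ↦ A k j * A j k) (fun j _ ↦ ?_) (Finset.mem_univ k)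
  rw [apply_mul_apply_eq_norm_sq hA]
  positivity

lemma star_normalizedCol_dotProduct (hA : A.IsHermitian) (k l : ι) :
    star (normalizedCol A k) ⬝ᵥ normalizedCol B l =
      (A * B) k l / ((√(re (A k k)) * √(re (B l l)) : ℝ) : 𝕜) := by
  have hcol : star (A.col k) ⬝ᵥ B.col l = (A * B) k l :=
    Finset.sum_congr rfl fun i _ ↦ congrArg (· * B i l) (hA.apply k i)
  simp only [normalizedCol, star_smul, smul_dotProduct, dotProduct_smul, hcol, smul_eq_mul,
    star_inv₀, RCLike.star_def, RCLike.conj_ofReal, RCLike.ofReal_mul]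
  ring

end HermitianMatrix

/-- Density matrices, i.e. quantum states: positive semidefinite matrices of trace one. -/
structure IsDensityMatrix {𝕜 ι : Type*} [RCLike 𝕜] [Fintype ι] (ρ : Matrix ι ι 𝕜) : Prop where
  posSemidef : ρ.PosSemidef
  trace_eq_one : ρ.trace = 1

lemma sum_mul_sum_of_pairwise_mul_eq_zero {R κ : Type*} [NonUnitalNonAssocSemiring R] [Fintype κ]
    {a : κ → R} (ha : Pairwise (a · * a · = 0)) : (∑ n, a n) * ∑ n, a n = ∑ n, a n * a n := by
  rw [Fintype.sum_mul_sum]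
  exact Finset.sum_congr rfl fun m _ ↦ Fintype.sum_eq_single m fun n hn ↦ ha hn.symm

namespace IsDensityMatrix

variable {𝕜 ι κ : Type*} [RCLike 𝕜] [Fintype ι] [Fintype κ]

lemma mul_self_apply_le {ρ : Matrix ι ι 𝕜} (hρ : IsDensityMatrix ρ) (k : ι) :
    (ρ * ρ) k k ≤ ρ k k := by
  simpa only [hρ.trace_eq_one, mul_one] using mul_self_apply_le_mul_trace hρ.posSemidef k

lemma mul_self_apply_eq_of_one_le_sum {ρ : κ → Matrix ι ι 𝕜} (hρ : ∀ n, IsDensityMatrix (ρ n))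
    (horth : Pairwise (ρ · * ρ · = 0)) {k : ι} (hsum : 1 ≤ ∑ n, ρ n k k) (n : κ) :
    (ρ n * ρ n) k k = ρ n k k := by
  have hle (m : κ) (_ : m ∈ Finset.univ) := (hρ m).mul_self_apply_le k
  have hS : (∑ m, ρ m).IsHermitian :=
    (Matrix.posSemidef_sum _ fun m _ ↦ (hρ m).posSemidef).isHermitian
  have hge : ∑ m, ρ m k k ≤ ∑ m, (ρ m * ρ m) k k :=
    calc ∑ m, ρ m k k
      _ ≤ (∑ m, ρ m k k) * ∑ m, ρ m k k := le_mul_of_one_le_left (zero_le_one.trans hsum) hsum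
      _ = (∑ m, ρ m) k k * (∑ m, ρ m) k k := by rw [Matrix.sum_apply]
      _ ≤ ((∑ m, ρ m) * ∑ m, ρ m) k k := apply_mul_self_le_mul_self_apply hS k
      _ = ∑ m, (ρ m * ρ m) k k := by
        rw [sum_mul_sum_of_pairwise_mul_eq_zero horth, Matrix.sum_apply]
  exact (Finset.sum_eq_sum_iff_of_le hle).mp ((Finset.sum_le_sum hle).antisymm hge) n
    (Finset.mem_univ n)

variable {ρ : Matrix ι ι 𝕜} {k : ι}

lemma star_normalizedCol_dotProduct_self (hρ : IsDensityMatrix ρ) (hk : 0 < ρ k k)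
    (hsq : (ρ * ρ) k k = ρ k k) : star (normalizedCol ρ k) ⬝ᵥ normalizedCol ρ k = 1 := by
  obtain ⟨hre, him⟩ := RCLike.pos_iff.mp hk
  rw [star_normalizedCol_dotProduct hρ.posSemidef.isHermitian, hsq, Real.mul_self_sqrt hre.le,
    RCLike.conj_eq_iff_re.mp (RCLike.conj_eq_iff_im.mpr him), div_self hk.ne']

lemma norm_normalizedCol_apply_sq (hρ : IsDensityMatrix ρ) (hk : 0 < ρ k k)
    (hsq : (ρ * ρ) k k = ρ k k) (i : ι) : ‖normalizedCol ρ k i‖ ^ 2 = re (ρ i i) := by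
  obtain ⟨hre, him⟩ := RCLike.pos_iff.mp hk
  have hminor : (‖ρ i k‖ : 𝕜) ^ 2 = ρ k k * ρ i i := by
    rw [← apply_mul_apply_eq_norm_sq hρ.posSemidef.isHermitian]
    refine (mul_self_apply_eq_mul_trace_iff hρ.posSemidef k).mp ?_ i
    rw [hsq, hρ.trace_eq_one, mul_one]
  have hnorm : ‖ρ i k‖ ^ 2 = re (ρ k k) * re (ρ i i) := by
    have := congrArg re hminor
    rw [RCLike.mul_re, him, zero_mul, sub_zero] at this
    exact_mod_cast this
  calc ‖normalizedCol ρ k i‖ ^ 2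
    _ = ‖ρ i k‖ ^ 2 / re (ρ k k) := by
      simp only [normalizedCol, Pi.smul_apply, Matrix.col_apply, smul_eq_mul, norm_mul, norm_inv,
        RCLike.norm_ofReal, abs_of_nonneg (Real.sqrt_nonneg _), mul_pow, inv_pow,
        Real.sq_sqrt hre.le]
      ring
    _ = re (ρ i i) := by rw [hnorm, mul_div_cancel_left₀ _ hre.ne']

end IsDensityMatrix

theorem stmt_2_general {𝕜 ι κ : Type*} [RCLike 𝕜] [Fintype ι] [Fintype κ] [DecidableEq κ]
    (ρ : κ → Matrix ι ι 𝕜) (hρ : ∀ n, IsDensityMatrix (ρ n)) (horth : Pairwise (ρ · * ρ · = 0))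
    (k : ι) (hk : ∀ n, 0 < ρ n k k) (hsum : 1 ≤ ∑ n, ρ n k k) :
    ∃ ψ : κ → ι → 𝕜,
      (∀ m n, star (ψ m) ⬝ᵥ ψ n = if m = n then 1 else 0) ∧
      ∀ n i, ‖ψ n i‖ ^ 2 = re (ρ n i i) := by
  have hsq := IsDensityMatrix.mul_self_apply_eq_of_one_le_sum hρ horth hsum
  refine ⟨fun n ↦ normalizedCol (ρ n) k, fun m n ↦ ?_, fun n ↦
    (hρ n).norm_normalizedCol_apply_sq (hk n) (hsq n)⟩
  split_ifs with h
  · subst h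
    exact (hρ m).star_normalizedCol_dotProduct_self (hk m) (hsq m)
  · rw [star_normalizedCol_dotProduct (hρ m).posSemidef.isHermitian, horth h, Matrix.zero_apply,
      zero_div]

theorem stmt_2 (d M : ℕ) (hM : 1 ≤ M) (hMd : M ≤ d)
    (p : Fin d → ℝ) (hp0 : ∀ k, 0 ≤ p k) (hp1 : ∑ k, p k = 1)
    (kstar : Fin d) (hkstar : p kstar = 1 / M)
    (ρ : Fin M → Matrix (Fin d) (Fin d) ℂ)
    (hpos : ∀ n, (ρ n).PosSemidef)
    (htr : ∀ n, (ρ n).trace = 1)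
    (horth : ∀ m n : Fin M, m ≠ n → ρ m * ρ n = 0)
    (hdiag : ∀ (n : Fin M) (k : Fin d), ρ n k k = (p k : ℂ)) :
    ∃ ψ : Fin M → Fin d → ℂ,
      (∀ m n : Fin M, ∑ k, conj (ψ m k) * ψ n k = if m = n then 1 else 0) ∧
      (∀ (n : Fin M) (k : Fin d), ‖ψ n k‖ ^ 2 = p k) := by
  have hM0 : (M : ℂ) ≠ 0 := by exact_mod_cast (Nat.one_le_iff_ne_zero.mp hM)
  have hkk (n : Fin M) : ρ n kstar kstar = (M : ℂ)⁻¹ := by simp [hdiag, hkstar]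
  have hk (n : Fin M) : 0 < ρ n kstar kstar := hkk n ▸ inv_pos.mpr (M.cast_nonneg.lt_of_ne' hM0)
  have hsum : 1 ≤ ∑ n, ρ n kstar kstar := by simp [hkk, hM0]
  obtain ⟨ψ, hψ, hnorm⟩ := stmt_2_general ρ (fun n ↦ ⟨hpos n, htr n⟩) (horth · ·) kstar hk hsum
  exact ⟨ψ, hψ, fun n k ↦ by simp [hnorm, hdiag]⟩
end

section
/- Let p be a probability vector of dimension d such that p k ≤ 1/2 for every k. Then there exist real phases φ₁, …, φ_d such that ∑ₖ p k · exp(i φₖ) = 0 (as a complex number). -/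
open scoped ComplexConjugate

/-! More generally, segments of lengths `r k` can join `0` to `z` as soon as none of `‖z‖` and the
`r k` exceeds the sum of the others. Induct on the number of segments: spheres are connected in
dimension at least two, so as the first segment `w` turns, `‖z - w‖` attains every value allowed by
the triangle inequality. Choose the largest such value not exceeding the total length of the
remaining segments; these then satisfy the same condition with target `z - w`. -/

section NormedSpace

variable {E : Type*} [NormedAddCommGroup E] [NormedSpace ℝ E]

lemma exists_norm_eq_one_norm_smul_eq [Nontrivial E] (z : E) :
    ∃ u : E, ‖u‖ = 1 ∧ ‖z‖ • u = z := by
  rcases eq_or_ne z 0 with rfl | hz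
  · obtain ⟨u, hu⟩ := exists_norm_eq E zero_le_one
    exact ⟨u, hu, by rw [norm_zero, zero_smul]⟩
  · exact ⟨NormedSpace.normalize z, NormedSpace.norm_normalize hz,
      NormedSpace.norm_smul_normalize z⟩

lemma exists_norm_eq_norm_sub_eq (hE : 1 < Module.rank ℝ E) (z : E) {r t : ℝ}
    (hrt : |‖z‖ - r| ≤ t) (htr : t ≤ ‖z‖ + r) : ∃ v : E, ‖v‖ = r ∧ ‖z - v‖ = t := by
  have hr : 0 ≤ r := by linarith [neg_le_of_abs_le hrt, le_of_abs_le hrt]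
  have : Nontrivial E := rank_pos_iff_nontrivial.mp (zero_lt_one.trans hE)
  obtain ⟨u, hu, hzu⟩ := exists_norm_eq_one_norm_smul_eq z
  have norm_smul_u (c : ℝ) : ‖c • u‖ = |c| := by rw [norm_smul, hu, mul_one, Real.norm_eq_abs]
  have h_near : ‖z - r • u‖ = |‖z‖ - r| := by rw [← norm_smul_u, sub_smul, hzu]
  have h_far : ‖z - (-r) • u‖ = ‖z‖ + r := by
    rw [← abs_of_nonneg (add_nonneg (norm_nonneg z) hr), ← norm_smul_u, add_smul, hzu, neg_smul,
      sub_neg_eq_add]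
  have h_mem (c : ℝ) (hc : |c| = r) : c • u ∈ Metric.sphere (0 : E) r := by
    rw [mem_sphere_zero_iff_norm, norm_smul_u, hc]
  obtain ⟨v, hv, hvt⟩ := (isPreconnected_sphere hE (0 : E) r).intermediate_value
    (h_mem r (abs_of_nonneg hr)) (h_mem (-r) (by rw [abs_neg, abs_of_nonneg hr]))
    (f := fun v => ‖z - v‖) (by fun_prop) ⟨h_near.trans_le hrt, htr.trans_eq h_far.symm⟩
  exact ⟨v, mem_sphere_zero_iff_norm.mp hv, hvt⟩

theorem exists_norm_eq_sum_eq {ι : Type*} (hE : 1 < Module.rank ℝ E) {s : Finset ι}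
    {r : ι → ℝ} (hr : ∀ k ∈ s, 0 ≤ r k) {z : E} (hz : ‖z‖ ≤ ∑ k ∈ s, r k)
    (hrz : ∀ k ∈ s, 2 * r k ≤ ‖z‖ + ∑ j ∈ s, r j) :
    ∃ v : ι → E, (∀ k ∈ s, ‖v k‖ = r k) ∧ ∑ k ∈ s, v k = z := by
  classical
  induction s using Finset.induction_on generalizing z with
  | empty => exact ⟨0, by simp, by simpa [eq_comm] using hz⟩
  | insert a s ha ih =>
    rw [Finset.forall_mem_insert] at hr hrz
    rw [Finset.sum_insert ha] at hz hrz
    obtain ⟨hra, hrs⟩ := hr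
    obtain ⟨hrza, hrzs⟩ := hrz
    set S := ∑ k ∈ s, r k
    have h_le_S : ∀ k ∈ s, r k ≤ S := fun k hk => Finset.single_le_sum hrs hk
    obtain ⟨w, hwa, hw⟩ : ∃ w : E, ‖w‖ = r a ∧ ‖z - w‖ = min S (‖z‖ + r a) := by
      refine exists_norm_eq_norm_sub_eq hE z (le_min ?_ ?_) (min_le_right _ _)
      · exact abs_le.mpr ⟨by linarith, by linarith [Finset.sum_nonneg hrs]⟩
      · exact abs_le.mpr ⟨by linarith [norm_nonneg z], by linarith⟩
    have h_remaining : ∀ k ∈ s, 2 * r k ≤ ‖z - w‖ + S := fun k hk => by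
      rw [hw, ← sub_le_iff_le_add]
      exact le_min (by linarith [h_le_S k hk]) (by linarith [hrzs k hk])
    obtain ⟨v, hvr, hvz⟩ := ih hrs (hw.trans_le (min_le_left _ _)) h_remaining
    refine ⟨Function.update v a w, (Finset.forall_mem_insert ..).mpr ⟨?_, fun k hk => ?_⟩, ?_⟩
    · rw [Function.update_self, hwa]
    · rw [Function.update_of_ne (ne_of_mem_of_not_mem hk ha), hvr k hk]
    · rw [Finset.sum_insert ha, Function.update_self, Finset.sum_update_of_notMem ha, hvz,
        add_sub_cancel]

end NormedSpace

lemma exists_mul_exp_I_mul_eq_of_norm_eq {z w : ℂ} (h : ‖z‖ = ‖w‖) :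
    ∃ φ : ℝ, z * Complex.exp (Complex.I * φ) = w := by
  refine ⟨w.arg - z.arg, ?_⟩
  calc z * Complex.exp (Complex.I * ↑(w.arg - z.arg))
      = ‖z‖ * Complex.exp (z.arg * Complex.I) * Complex.exp (Complex.I * ↑(w.arg - z.arg)) := by
        rw [Complex.norm_mul_exp_arg_mul_I]
    _ = ‖w‖ * Complex.exp (w.arg * Complex.I) := by
        rw [h, mul_assoc, ← Complex.exp_add]
        push_cast
        ring_nf
    _ = w := Complex.norm_mul_exp_arg_mul_I w

theorem stmt_3_general {ι : Type*} [Fintype ι] {c : ι → ℂ} (hc : ∀ k, 2 * ‖c k‖ ≤ ∑ j, ‖c j‖) :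
    ∃ φ : ι → ℝ, ∑ k, c k * Complex.exp (Complex.I * φ k) = 0 := by
  obtain ⟨v, hvc, hv⟩ : ∃ v : ι → ℂ, (∀ k ∈ Finset.univ, ‖v k‖ = ‖c k‖) ∧ ∑ k, v k = 0 := by
    refine exists_norm_eq_sum_eq ?_ (fun k _ => norm_nonneg (c k)) ?_ fun k _ => ?_
    · rw [Complex.rank_real_complex]
      exact Cardinal.one_lt_two
    · rw [norm_zero]
      exact Finset.sum_nonneg fun k _ => norm_nonneg (c k)
    · rw [norm_zero, zero_add]
      exact hc k
  choose φ hφ using fun k => exists_mul_exp_I_mul_eq_of_norm_eq (hvc k (Finset.mem_univ k)).symm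
  exact ⟨φ, by simp only [hφ, hv]⟩

theorem stmt_3 (d : ℕ)
    (p : Fin d → ℝ) (hp0 : ∀ k, 0 ≤ p k) (hp1 : ∑ k, p k = 1)
    (hhalf : ∀ k, p k ≤ 1 / 2) :
    ∃ φ : Fin d → ℝ, ∑ k, (p k : ℂ) * Complex.exp (Complex.I * (φ k : ℂ)) = 0 := by
  refine stmt_3_general fun k => ?_
  simp only [Complex.norm_of_nonneg (hp0 _), hp1]
  linarith [hhalf k]
end

section
/- Let p be a probability vector of dimension d ≥ 2. There exist two density matrices ρ and σ of size d, both with classical version p (i.e. ρₖₖ = σₖₖ = p k for all k), such that ρ · σ = 0, if and only if p k ≤ 1/2 for every k. (Equivalently, the 2-distinguishability region 𝒜²_d equals the permutohedron 𝒫²_d.) -/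
open scoped Matrix ComplexConjugate ComplexOrder

/-!
If `ρ` and `σ` are positive semidefinite with `ρ * σ = 0`, the `(k, k)` entry of the product reads
`ρ k k * σ k k = -∑ j ≠ k, ρ k j * σ j k`; bounding off-diagonal entries by diagonal ones through
`2 × 2` minors gives `p k ≤ ∑ j ≠ k, p j` for the common diagonal `p`.

Conversely, these are the inequalities under which segments of lengths `p k` form a closed polygon
in the plane: `∑ k, p k * z k = 0` for some phases `z k`. To see this, let `p m` be the largest
length. The continuous function `z ↦ ‖∑ k ≠ m, p k * z k‖` on the connected torus of phases is at
least `p m` when all phases agree, and at most `p m` when each new term opposes the partial sum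
before it; where it equals `p m`, the last segment closes the polygon. The rank-one matrices of the
vectors `√(p k)` and `√(p k) * z k` then have diagonal `p`, and they annihilate each other because
the inner product of the two vectors is `∑ k, p k * z k`.
-/

section PosSemidef

variable {ι 𝕜 : Type*} [RCLike 𝕜]

theorem norm_apply_le_sqrt_mul_sqrt_of_posSemidef {A : Matrix ι ι 𝕜} (hA : A.PosSemidef)
    (i j : ι) : ‖A i j‖ ≤ √‖A i i‖ * √‖A j j‖ := by
  have hdiag (k : ι) : A k k = (‖A k k‖ : 𝕜) := (RCLike.norm_of_nonneg' hA.diag_nonneg).symm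
  have hminor := (hA.submatrix ![i, j]).det_nonneg
  simp only [Matrix.det_fin_two, Matrix.submatrix_apply, Matrix.cons_val_zero,
    Matrix.cons_val_one] at hminor
  rw [← hA.isHermitian.apply j i, RCLike.star_def, RCLike.mul_conj, hdiag i, hdiag j,
    sub_nonneg] at hminor
  rw [← Real.sqrt_mul (norm_nonneg _)]
  exact Real.le_sqrt_of_sq_le (mod_cast hminor)

theorem sqrt_diag_mul_sqrt_diag_le_sum_erase_of_mul_eq_zero [Fintype ι] [DecidableEq ι]
    {A B : Matrix ι ι 𝕜} (hA : A.PosSemidef) (hB : B.PosSemidef) (hAB : A * B = 0) (k : ι) :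
    √‖A k k‖ * √‖B k k‖ ≤ ∑ j ∈ Finset.univ.erase k, √‖A j j‖ * √‖B j j‖ := by
  set x : ι → ℝ := fun j => √‖A j j‖ * √‖B j j‖ with hx
  have hx_nonneg (j : ι) : 0 ≤ x j := by positivity
  have hentry : A k k * B k k + ∑ j ∈ Finset.univ.erase k, A k j * B j k = 0 := by
    rw [Finset.add_sum_erase _ (fun j => A k j * B j k) (Finset.mem_univ k), ← Matrix.mul_apply,
      hAB, Matrix.zero_apply]
  have hterm (j : ι) : ‖A k j * B j k‖ ≤ x k * x j := by
    calc ‖A k j * B j k‖ = ‖A k j‖ * ‖B j k‖ := norm_mul _ _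
      _ ≤ (√‖A k k‖ * √‖A j j‖) * (√‖B j j‖ * √‖B k k‖) := by
        gcongr <;> exact norm_apply_le_sqrt_mul_sqrt_of_posSemidef ‹_› _ _
      _ = x k * x j := by simp only [hx]; ring
  have hmul : x k * x k ≤ x k * ∑ j ∈ Finset.univ.erase k, x j := by
    calc x k * x k = ‖A k k * B k k‖ := by
          rw [hx, mul_mul_mul_comm, Real.mul_self_sqrt (norm_nonneg _),
            Real.mul_self_sqrt (norm_nonneg _), norm_mul]
      _ = ‖∑ j ∈ Finset.univ.erase k, A k j * B j k‖ := by
          rw [eq_neg_of_add_eq_zero_left hentry, norm_neg]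
      _ ≤ ∑ j ∈ Finset.univ.erase k, x k * x j := norm_sum_le_of_le _ fun j _ => hterm j
      _ = x k * ∑ j ∈ Finset.univ.erase k, x j := (Finset.mul_sum _ _ _).symm
  rcases (hx_nonneg k).eq_or_lt with hk | hk
  · exact hk.symm.trans_le (Finset.sum_nonneg fun j _ => hx_nonneg j)
  · exact le_of_mul_le_mul_left hmul hk

end PosSemidef

section Polygon

variable {ι : Type*}

theorem exists_circle_norm_sum_mul_insert_eq [DecidableEq ι] (p : ι → ℝ) {s : Finset ι} {a : ι}
    (ha : a ∉ s) (z : ι → Circle) :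
    ∃ w : ι → Circle,
      ‖∑ k ∈ insert a s, (p k : ℂ) * w k‖ = |‖∑ k ∈ s, (p k : ℂ) * z k‖ - p a| := by
  obtain ⟨c, hc, hcS⟩ := RCLike.exists_norm_mul_eq_self (∑ k ∈ s, (p k : ℂ) * z k)
  set S := ∑ k ∈ s, (p k : ℂ) * z k
  let u : Circle := ⟨-c, mem_sphere_zero_iff_norm.mpr (by rwa [norm_neg])⟩
  have hrest : ∑ k ∈ s, (p k : ℂ) * Function.update z a u k = S :=
    Finset.sum_congr rfl fun k hk => by
      rw [Function.update_of_ne (ne_of_mem_of_not_mem hk ha)]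
  have hsum : ∑ k ∈ insert a s, (p k : ℂ) * Function.update z a u k = c * (‖S‖ - p a : ℝ) := by
    rw [Finset.sum_insert ha, hrest, Function.update_self]
    push_cast
    linear_combination -hcS
  refine ⟨Function.update z a u, ?_⟩
  rw [hsum, norm_mul, hc, one_mul, Complex.norm_real, Real.norm_eq_abs]

theorem exists_circle_norm_sum_mul_le {p : ι → ℝ} {M : ℝ} (hM : 0 ≤ M) (s : Finset ι)
    (hp : ∀ k ∈ s, p k ∈ Set.Icc 0 M) :
    ∃ z : ι → Circle, ‖∑ k ∈ s, (p k : ℂ) * z k‖ ≤ M := by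
  classical
  induction s using Finset.induction_on with
  | empty => exact ⟨1, by simpa using hM⟩
  | insert a s ha ih =>
    obtain ⟨z, hz⟩ := ih fun k hk => hp k (Finset.mem_insert_of_mem hk)
    obtain ⟨w, hw⟩ := exists_circle_norm_sum_mul_insert_eq p ha z
    obtain ⟨hpa, hpaM⟩ := hp a (Finset.mem_insert_self a s)
    exact ⟨w, hw.trans_le (abs_sub_le_of_nonneg_of_le (norm_nonneg _) hz hpa hpaM)⟩

theorem exists_circle_norm_sum_mul_eq {p : ι → ℝ} {r : ℝ} (hr : 0 ≤ r) (s : Finset ι)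
    (hp : ∀ k ∈ s, p k ∈ Set.Icc 0 r) (hrs : r ≤ ∑ k ∈ s, p k) :
    ∃ z : ι → Circle, ‖∑ k ∈ s, (p k : ℂ) * z k‖ = r := by
  have hcont : Continuous fun z : ι → Circle => ‖∑ k ∈ s, (p k : ℂ) * z k‖ := by fun_prop
  have haligned : r ≤ ‖∑ k ∈ s, (p k : ℂ) * (1 : ι → Circle) k‖ := by
    simp only [Pi.one_apply, Circle.coe_one, mul_one, ← Complex.ofReal_sum, Complex.norm_real]
    exact hrs.trans (le_abs_self _)
  exact mem_range_of_exists_le_of_exists_ge hcont (exists_circle_norm_sum_mul_le hr s hp)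
    ⟨1, haligned⟩

theorem exists_circle_sum_mul_eq_zero [Fintype ι] [DecidableEq ι] {p : ι → ℝ}
    (hp0 : ∀ k, 0 ≤ p k) (hp : ∀ k, p k ≤ ∑ j ∈ Finset.univ.erase k, p j) :
    ∃ z : ι → Circle, ∑ k, (p k : ℂ) * z k = 0 := by
  cases isEmpty_or_nonempty ι with
  | inl _ => exact ⟨1, Fintype.sum_empty _⟩
  | inr _ =>
    obtain ⟨m, hm⟩ := Finite.exists_max p
    obtain ⟨z, hz⟩ := exists_circle_norm_sum_mul_eq (hp0 m) (Finset.univ.erase m)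
      (fun k _ => ⟨hp0 k, hm k⟩) (hp m)
    obtain ⟨w, hw⟩ := exists_circle_norm_sum_mul_insert_eq p (Finset.notMem_erase m Finset.univ) z
    rw [Finset.insert_erase (Finset.mem_univ m), hz, sub_self, abs_zero, norm_eq_zero] at hw
    exact ⟨w, hw⟩

end Polygon

section CommonDiagonal

variable {ι : Type*} [Fintype ι]

theorem exists_posSemidef_mul_eq_zero_of_sum_mul_eq_zero {p : ι → ℝ} (hp0 : ∀ k, 0 ≤ p k)
    (z : ι → Circle) (hz : ∑ k, (p k : ℂ) * z k = 0) :
    ∃ ρ σ : Matrix ι ι ℂ, ρ.PosSemidef ∧ σ.PosSemidef ∧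
      (∀ k, ρ k k = (p k : ℂ)) ∧ (∀ k, σ k k = (p k : ℂ)) ∧ ρ * σ = 0 := by
  let ψ (w : ι → Circle) : ι → ℂ := fun k => (√(p k) : ℂ) * w k
  have hsqrt (k : ι) : (√(p k) : ℂ) * (√(p k) : ℂ) = p k := by
    rw [← Complex.ofReal_mul, Real.mul_self_sqrt (hp0 k)]
  have hdiag (w : ι → Circle) (k : ι) : Matrix.vecMulVec (ψ w) (star (ψ w)) k k = p k := by
    have hw : (w k : ℂ) * conj (w k : ℂ) = 1 := by
      rw [Complex.mul_conj, Circle.normSq_coe, Complex.ofReal_one]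
    simp only [Matrix.vecMulVec_apply, Pi.star_apply, RCLike.star_def, ψ, map_mul,
      Complex.conj_ofReal]
    rw [mul_mul_mul_comm, hsqrt, hw, mul_one]
  have horth : star (ψ 1) ⬝ᵥ ψ z = 0 := by
    rw [← hz]
    refine Finset.sum_congr rfl fun k _ => ?_
    simp [ψ, ← mul_assoc, hsqrt]
  refine ⟨_, _, Matrix.posSemidef_vecMulVec_self_star (ψ 1),
    Matrix.posSemidef_vecMulVec_self_star (ψ z), hdiag 1, hdiag z, ?_⟩
  rw [Matrix.vecMulVec_mul_vecMulVec, horth, zero_smul, Matrix.vecMulVec_zero]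

theorem stmt_4_general {p : ι → ℝ} (hp0 : ∀ k, 0 ≤ p k) :
    (∃ ρ σ : Matrix ι ι ℂ, ρ.PosSemidef ∧ σ.PosSemidef ∧
      (∀ k, ρ k k = (p k : ℂ)) ∧ (∀ k, σ k k = (p k : ℂ)) ∧ ρ * σ = 0) ↔
    ∀ k, p k ≤ (∑ j, p j) / 2 := by
  classical
  have hpolygon (k : ι) :
      p k ≤ (∑ j, p j) / 2 ↔ p k ≤ ∑ j ∈ Finset.univ.erase k, p j := by
    rw [← Finset.add_sum_erase _ _ (Finset.mem_univ k)]
    constructor <;> intro h <;> linarith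
  simp only [hpolygon]
  constructor
  · rintro ⟨ρ, σ, hρ, hσ, hρp, hσp, hρσ⟩ k
    have hnorm (j : ι) : ‖(p j : ℂ)‖ = p j := Complex.norm_of_nonneg (hp0 j)
    simpa only [hρp, hσp, hnorm, Real.mul_self_sqrt (hp0 _)] using
      sqrt_diag_mul_sqrt_diag_le_sum_erase_of_mul_eq_zero hρ hσ hρσ k
  · intro hp
    obtain ⟨z, hz⟩ := exists_circle_sum_mul_eq_zero hp0 hp
    exact exists_posSemidef_mul_eq_zero_of_sum_mul_eq_zero hp0 z hz

end CommonDiagonal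

theorem stmt_4 (d : ℕ) (hd : 2 ≤ d)
    (p : Fin d → ℝ) (hp0 : ∀ k, 0 ≤ p k) (hp1 : ∑ k, p k = 1) :
    (∃ ρ σ : Matrix (Fin d) (Fin d) ℂ,
      ρ.PosSemidef ∧ ρ.trace = 1 ∧ σ.PosSemidef ∧ σ.trace = 1 ∧
      (∀ k : Fin d, ρ k k = (p k : ℂ)) ∧ (∀ k : Fin d, σ k k = (p k : ℂ)) ∧
      ρ * σ = 0) ↔
    (∀ k, p k ≤ 1 / 2) := by
  have trace_eq_one {A : Matrix (Fin d) (Fin d) ℂ} (hA : ∀ k, A k k = (p k : ℂ)) :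
      A.trace = 1 := by
    simp only [Matrix.trace, Matrix.diag_apply, hA, ← Complex.ofReal_sum, hp1, Complex.ofReal_one]
  rw [← hp1, ← stmt_4_general hp0]
  exact ⟨fun ⟨ρ, σ, hρ, _, hσ, _, hdiag⟩ => ⟨ρ, σ, hρ, hσ, hdiag⟩,
    fun ⟨ρ, σ, hρ, hσ, hρp, hσp, hρσ⟩ =>
      ⟨ρ, σ, hρ, trace_eq_one hρp, hσ, trace_eq_one hσp, hρp, hσp, hρσ⟩⟩
end

section
/- Let p be a probability vector of dimension d ≥ 1. There exist d density matrices ρ⁽¹⁾, …, ρ⁽ᵈ⁾ of size d, all with classical version p and pairwise orthogonal (ρ⁽ᵐ⁾ · ρ⁽ⁿ⁾ = 0 for m ≠ n), if and only if p is the uniform distribution, p k = 1/d for every k. (Equivalently, the d-distinguishability region 𝒜ᵈ_d equals the permutohedron 𝒫ᵈ_d = {η}.) -/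
open scoped Matrix ComplexConjugate ComplexOrder

/-!
Let `f i` be `d` pairwise annihilating operators of trace one on a `d`-dimensional space. None of
them is nilpotent, so there are vectors `v i` with `f i (f i (v i)) ≠ 0`, and the vectors
`f i (v i)` form a basis on which `f j` vanishes for `j ≠ i`. Hence each `f i` is of rank one, and a
rank-one operator of trace one is idempotent; therefore `∑ i, f i` fixes every `f i (v i)` and is
the identity. If the `f i` are matrices with the same diagonal `p`, reading the diagonal of their
sum gives `d * p k = 1`.

Conversely, the columns of a complex Hadamard matrix are orthogonal vectors with entries of modulus
one, so the projectors onto them have constant diagonal `1 / d`. The Fourier matrix is Hadamard.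
-/

section LinearMap

variable {R M N ι : Type*} [CommRing R] [AddCommGroup M] [Module R M] [AddCommGroup N] [Module R N]

theorem exists_apply_apply_ne_zero_of_trace_ne_zero [IsReduced R] {f : Module.End R M}
    (hf : LinearMap.trace R M f ≠ 0) : ∃ v, f (f v) ≠ 0 := by
  contrapose! hf
  have f_nilpotent : IsNilpotent f := ⟨2, LinearMap.ext fun v ↦ by simpa [pow_two] using hf v⟩
  exact (LinearMap.isNilpotent_trace_of_isNilpotent f_nilpotent).eq_zero

theorem linearIndependent_of_pairwise_apply_eq_zero [IsDomain R] [Module.IsTorsionFree R N]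
    {f : ι → M →ₗ[R] N} {u : ι → M} (hoff : Pairwise fun i j ↦ f i (u j) = 0)
    (hdiag : ∀ i, f i (u i) ≠ 0) : LinearIndependent R u := by
  refine linearIndependent_iff'.2 fun s c hc i hi ↦ ?_
  have hsum : ∑ j ∈ s, c j • f i (u j) = c i • f i (u i) :=
    Finset.sum_eq_single_of_mem i hi fun j _ hji ↦ by rw [hoff hji.symm, smul_zero]
  have hzero : c i • f i (u i) = 0 := by simpa [hsum] using congrArg (f i) hc
  exact (smul_eq_zero.1 hzero).resolve_right (hdiag i)

theorem eq_coord_smulRight_of_apply_eq_zero (b : Module.Basis ι R M) {f : M →ₗ[R] N} {i : ι}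
    (hf : ∀ j ≠ i, f (b j) = 0) : f = (b.coord i).smulRight (f (b i)) := by
  refine b.ext fun j ↦ ?_
  obtain rfl | hji := eq_or_ne j i
  · simp
  · simp [hf j hji, hji]

theorem isIdempotentElem_smulRight_of_apply_eq_one {φ : Module.Dual R M} {y : M} (h : φ y = 1) :
    IsIdempotentElem (φ.smulRight y : Module.End R M) :=
  LinearMap.ext fun x ↦ by simp [h]

end LinearMap

section TraceOne

variable {K ι : Type*} [Field K] [Fintype ι]

theorem completeOrthogonalIdempotents_of_trace_eq_one {V : Type*} [AddCommGroup V] [Module K V]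
    [FiniteDimensional K V] (hcard : Fintype.card ι = Module.finrank K V)
    {f : ι → Module.End K V} (htrace : ∀ i, LinearMap.trace K V (f i) = 1)
    (hortho : Pairwise (f · * f · = 0)) : CompleteOrthogonalIdempotents f := by
  have hsq (i) : ∃ v, f i (f i v) ≠ 0 :=
    exists_apply_apply_ne_zero_of_trace_ne_zero (by simp [htrace])
  choose v hv using hsq
  have hoff : Pairwise fun i j ↦ f i (f j (v j)) = 0 := fun i j hij ↦
    LinearMap.congr_fun (hortho hij) (v j)
  let b : Module.Basis ι K V := basisOfLinearIndependentOfCardEqFinrank' (fun i ↦ f i (v i))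
    (linearIndependent_of_pairwise_apply_eq_zero hoff hv) hcard
  have hb (i) : b i = f i (v i) := by simp [b]
  have hrank (i) : f i = (b.coord i).smulRight (f i (b i)) :=
    eq_coord_smulRight_of_apply_eq_zero b fun j hji ↦ by rw [hb, hoff hji.symm]
  have hidem (i) : IsIdempotentElem (f i) := by
    rw [hrank i]
    apply isIdempotentElem_smulRight_of_apply_eq_one
    rw [← LinearMap.trace_smulRight, ← hrank, htrace]
  refine ⟨⟨hidem, hortho⟩, b.ext fun i ↦ ?_⟩
  calc (∑ j, f j) (b i) = ∑ j, f j (b i) := LinearMap.sum_apply ..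
    _ = f i (b i) := Fintype.sum_eq_single i fun j hji ↦ by rw [hb, hoff hji]
    _ = b i := by rw [hb]; exact LinearMap.congr_fun (hidem i) (v i)

variable {n : Type*} [Fintype n]

theorem completeOrthogonalIdempotents_of_matrix_trace_eq_one [DecidableEq n]
    (hcard : Fintype.card ι = Fintype.card n) {ρ : ι → Matrix n n K}
    (htrace : ∀ i, (ρ i).trace = 1) (hortho : Pairwise (ρ · * ρ · = 0)) :
    CompleteOrthogonalIdempotents ρ := by
  let e : Matrix n n K →+* Module.End K (n → K) :=
    RingHomClass.toRingHom (Matrix.toLinAlgEquiv' (R := K) (n := n))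
  have he : Function.Injective e := (Matrix.toLinAlgEquiv' (R := K) (n := n)).injective
  refine (CompleteOrthogonalIdempotents.map_injective_iff e he).1 <|
    completeOrthogonalIdempotents_of_trace_eq_one (by simpa using hcard)
      (fun i ↦ (Matrix.trace_toLin'_eq _).trans (htrace i)) fun i j hij ↦ ?_
  exact (map_mul e _ _).symm.trans (by rw [hortho hij, map_zero])

theorem eq_one_div_card_of_diag_eq (hcard : Fintype.card ι = Fintype.card n)
    {ρ : ι → Matrix n n K} {p : n → K} (htrace : ∀ i, (ρ i).trace = 1)
    (hdiag : ∀ i k, ρ i k k = p k) (hortho : Pairwise (ρ · * ρ · = 0)) (k : n) :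
    p k = 1 / Fintype.card n := by
  classical
  have hsum : ∑ i, ρ i = 1 :=
    (completeOrthogonalIdempotents_of_matrix_trace_eq_one hcard htrace hortho).complete
  refine eq_one_div_of_mul_eq_one_right ?_
  calc (Fintype.card n : K) * p k = ∑ i, ρ i k k := by simp [hdiag, hcard]
    _ = (∑ i, ρ i) k k := (Matrix.sum_apply ..).symm
    _ = 1 := by rw [hsum, Matrix.one_apply_eq]

end TraceOne

section Hadamard

theorem isHadamard_of_isPrimitive {𝕜 R : Type*} [RCLike 𝕜] [CommRing R] [Fintype R]
    [DecidableEq R] {ψ : AddChar R 𝕜} (hψ : ψ.IsPrimitive) :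
    (Matrix.of fun j k ↦ ψ (j * k)).IsHadamard := by
  refine .of_mul_conjTranspose (fun j k ↦ ?_) ?_ ?_
  · simp [Unitary.mem_iff, ← AddChar.map_neg_eq_conj, ← AddChar.map_add_eq_mul]
  · ext j k
    have hentry (l : R) : ψ (j * l) * star (ψ (k * l)) = ψ (l * (j - k)) := by
      rw [← starRingEnd_apply, ← AddChar.map_neg_eq_conj, ← AddChar.map_add_eq_mul]
      ring_nf
    calc (Matrix.of (fun j k ↦ ψ (j * k)) * (Matrix.of fun j k ↦ ψ (j * k))ᴴ) j k
        = ∑ l, ψ (j * l) * star (ψ (k * l)) := rfl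
      _ = if j - k = 0 then (Fintype.card R : 𝕜) else 0 := by
        simp_rw [hentry, AddChar.sum_mulShift _ hψ, Nat.cast_ite, Nat.cast_zero]
      _ = ((Fintype.card R : 𝕜) • (1 : Matrix R R 𝕜)) j k := by
        simp [Matrix.one_apply, sub_eq_zero]
  · exact IsRegular.of_ne_zero (by simp)

theorem exists_isHadamard_complex (n : Type*) [Fintype n] [DecidableEq n] [Nonempty n] :
    ∃ A : Matrix n n ℂ, A.IsHadamard := by
  have e : ZMod (Fintype.card n) ≃ n := Fintype.equivOfCardEq (ZMod.card _)
  exact ⟨_, (isHadamard_of_isPrimitive (ZMod.isPrimitive_stdAddChar _)).reindex e e⟩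

variable {𝕜 n : Type*} [RCLike 𝕜] [Fintype n]

/-- The density matrix of the pure state along the `j`-th column of a Hadamard matrix `A`, that is,
the orthogonal projector onto that column. The factor `(card n)⁻¹` normalizes it, since the
columns of a Hadamard matrix have squared norm `card n`. -/
noncomputable def columnState (A : Matrix n n 𝕜) (j : n) : Matrix n n 𝕜 :=
  (Fintype.card n : 𝕜)⁻¹ • Matrix.vecMulVec (A.col j) (star (A.col j))

theorem posSemidef_columnState (A : Matrix n n 𝕜) (j : n) : (columnState A j).PosSemidef :=
  (Matrix.posSemidef_vecMulVec_self_star _).smul (by positivity)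

variable [DecidableEq n] {A : Matrix n n 𝕜}

theorem columnState_apply_self (hA : A.IsHadamard) (j k : n) :
    columnState A j k k = 1 / Fintype.card n := by
  have hunit : A k j * star (A k j) = 1 := Unitary.mul_star_self_of_mem (hA.apply_mem k j)
  rw [one_div]
  exact (congrArg _ hunit).trans (mul_one _)

theorem trace_columnState [Nonempty n] (hA : A.IsHadamard) (j : n) :
    (columnState A j).trace = 1 := by
  simp [Matrix.trace, columnState_apply_self hA]

theorem columnState_mul_columnState_of_ne (hA : A.IsHadamard) {i j : n} (hij : i ≠ j) :
    columnState A i * columnState A j = 0 := by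
  have hcols : star (A.col i) ⬝ᵥ A.col j = 0 :=
    calc star (A.col i) ⬝ᵥ A.col j = (Aᴴ * A) i j := rfl
      _ = 0 := by simp [hA.conjTranspose_mul, Matrix.one_apply_ne hij]
  simp [columnState, Matrix.vecMulVec_mul_vecMulVec, hcols]

end Hadamard

theorem stmt_5_general {n : Type*} [Fintype n] [Nonempty n] (p : n → ℂ) :
    (∃ ρ : n → Matrix n n ℂ,
      (∀ i, (ρ i).PosSemidef) ∧ (∀ i, (ρ i).trace = 1) ∧
      (∀ i k, ρ i k k = p k) ∧ (∀ i j, i ≠ j → ρ i * ρ j = 0)) ↔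
    ∀ k, p k = 1 / Fintype.card n := by
  classical
  constructor
  · rintro ⟨ρ, -, htrace, hdiag, hortho⟩
    exact eq_one_div_card_of_diag_eq rfl htrace hdiag hortho
  · intro hp
    obtain ⟨A, hA⟩ := exists_isHadamard_complex n
    exact ⟨columnState A, posSemidef_columnState A, trace_columnState hA,
      fun j k ↦ (columnState_apply_self hA j k).trans (hp k).symm,
      fun i j ↦ columnState_mul_columnState_of_ne hA⟩

theorem stmt_5 (d : ℕ) (hd : 1 ≤ d)
    (p : Fin d → ℝ) (hp0 : ∀ k, 0 ≤ p k) (hp1 : ∑ k, p k = 1) :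
    (∃ ρ : Fin d → Matrix (Fin d) (Fin d) ℂ,
      (∀ n, (ρ n).PosSemidef) ∧ (∀ n, (ρ n).trace = 1) ∧
      (∀ (n : Fin d) (k : Fin d), ρ n k k = (p k : ℂ)) ∧
      (∀ m n : Fin d, m ≠ n → ρ m * ρ n = 0)) ↔
    (∀ k, p k = 1 / d) := by
  have : Nonempty (Fin d) := Fin.pos_iff_nonempty.1 hd
  simpa [Complex.ext_iff] using stmt_5_general fun k ↦ (p k : ℂ)
end

section
/- Let d > 2 be even and define the probability vector p of dimension d by p k = 2/(3(d−1)) for k ∈ {1,2,3} and p k = 1/(d−1) for k ∈ {4,…,d}. Then p k ≤ 1/(d−1) for every k (so p lies in the permutohedron 𝒫^{d−1}_d), yet there do NOT exist d−1 density matrices of size d, all with classical version p, that are pairwise orthogonal. In particular, the (d−1)-distinguishability region 𝒜^{d−1}_d is a proper subset of 𝒫^{d−1}_d for even d > 2. -/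
open scoped Matrix ComplexConjugate ComplexOrder

/-!
With `N = d - 1`, the complement `M = 1 - ∑ n, ρ n` of `N` orthogonal states is positive
semidefinite of trace one and has diagonal entries `x k = 1 - N * p k`. At a `k` with `x k = 0` the
basis vector is resolved by the `ρ n` alone, which gives each `ρ n` a fixed vector. So the `ρ n` are
pure, and so is `M`: `ρ n = uₙ uₙᴴ` and `M = v vᴴ` with `v ⟂ uₙ`. If only `x a`, `x b`, `x c` are
nonzero, then three terms of `∑ k, conj (v k) * uₙ k = 0` survive and form a triangle in `ℂ`. By
Heron's formula its signed area is `± √(x a * x b * x c) / (2 * N)`, with only the sign depending on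
`n`. The signed areas add up to zero because `∑ n, ρ n = 1 - M`, but an odd number of terms `± r`
with `r ≠ 0` cannot.
-/

section Matrix

open Matrix

variable {𝕜 κ : Type*} [RCLike 𝕜] [Fintype κ] {A P : Matrix κ κ 𝕜}

theorem posSemidef_trace_smul_sub_mul_self (hA : A.PosSemidef) :
    (A.trace • A - A * A).PosSemidef := by
  classical
  set φ := Unitary.conjStarAlgAut 𝕜 (Matrix κ κ 𝕜) hA.isHermitian.eigenvectorUnitary
  set eig := hA.isHermitian.eigenvalues
  have hspectral : A = φ (diagonal (RCLike.ofReal ∘ eig)) := hA.isHermitian.spectral_theorem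
  have htrace : A.trace = ∑ i, (eig i : 𝕜) := hA.isHermitian.trace_eq_sum_eigenvalues
  have hdiag : A.trace • A - A * A =
      φ (diagonal fun i => (((∑ j, eig j) * eig i - eig i * eig i : ℝ) : 𝕜)) := by
    clear_value φ eig
    rw [htrace, hspectral, ← map_smul, ← map_mul, ← map_sub, diagonal_mul_diagonal,
      ← diagonal_smul, diagonal_sub]
    congr 2
    ext i
    simp
  have hnonneg : ∀ i, 0 ≤ (∑ j, eig j) * eig i - eig i * eig i := fun i =>
    sub_nonneg.2 <| mul_le_mul_of_nonneg_right
      (Finset.single_le_sum (fun j _ => hA.eigenvalues_nonneg j) (Finset.mem_univ i))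
      (hA.eigenvalues_nonneg i)
  rw [hdiag, Unitary.conjStarAlgAut_apply]
  exact PosSemidef.mul_mul_conjTranspose_same
    (.diagonal fun i => RCLike.ofReal_nonneg.2 (hnonneg i)) _

theorem posSemidef_one_sub_of_posSemidef_sub_mul_self [DecidableEq κ] (hA : A.IsHermitian)
    (h : (A - A * A).PosSemidef) : (1 - A).PosSemidef := by
  have hsq : ((1 - A)ᴴ * (1 - A)).PosSemidef := posSemidef_conjTranspose_mul_self _
  convert h.add hsq using 1
  rw [conjTranspose_sub, conjTranspose_one, hA.eq]
  noncomm_ring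

theorem col_eq_zero_of_diag_eq_zero {κ : Type*} [Finite κ] {A : Matrix κ κ 𝕜}
    (hA : A.PosSemidef) {k : κ} (hk : A k k = 0) : A.col k = 0 := by
  classical
  cases nonempty_fintype κ
  rw [← mulVec_single_one, ← hA.dotProduct_mulVec_zero_iff]
  simpa using hk

theorem eq_of_mul_eq_right_of_trace_eq (hA : A.PosSemidef) (hP : IsStarProjection P)
    (hAP : A * P = P) (htrace : A.trace = P.trace) : A = P := by
  classical
  have hPA : P * A = P := by
    simpa [hA.isHermitian.eq, (star_eq_conjTranspose P).symm.trans hP.isSelfAdjoint.star_eq] using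
      congrArg conjTranspose hAP
  have hcompress : (1 - P)ᴴ * A * (1 - P) = A - P := by
    rw [← star_eq_conjTranspose, hP.one_sub.isSelfAdjoint.star_eq]
    simp only [sub_mul, mul_sub, one_mul, mul_one, hAP, hPA, hP.isIdempotentElem.eq]
    abel
  have hsub : (A - P).PosSemidef := hcompress ▸ hA.conjTranspose_mul_mul_same (1 - P)
  rw [← sub_eq_zero, ← hsub.trace_eq_zero_iff, trace_sub, htrace, sub_self]

/-- A pure state: the orthogonal projection onto the line spanned by a unit vector. -/
def IsPure (A : Matrix κ κ 𝕜) : Prop :=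
  ∃ u : κ → 𝕜, star u ⬝ᵥ u = 1 ∧ A = vecMulVec u (star u)

theorem IsPure.isStarProjection (h : IsPure A) : IsStarProjection A := by
  obtain ⟨u, hu, rfl⟩ := h
  refine isStarProjection_iff'.2 ⟨?_, ?_⟩
  · rw [vecMulVec_mul_vecMulVec, hu, one_smul]
  · rw [star_eq_conjTranspose, conjTranspose_vecMulVec, star_star]

theorem exists_smul_star_dotProduct_self_eq_one {v : κ → 𝕜} (hv : v ≠ 0) :
    ∃ c : 𝕜, star (c • v) ⬝ᵥ (c • v) = 1 := by
  have hne : WithLp.toLp 2 v ≠ 0 := by simpa using hv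
  refine ⟨((‖WithLp.toLp 2 v‖⁻¹ : ℝ) : 𝕜), ?_⟩
  rw [dotProduct_comm, ← EuclideanSpace.inner_toLp_toLp, WithLp.toLp_smul,
    inner_self_eq_norm_sq_to_K, RCLike.ofReal_inv, norm_smul_inv_norm hne, RCLike.ofReal_one,
    one_pow]

theorem isPure_of_mulVec_eq_self (hA : A.PosSemidef) (htrace : A.trace = 1) {v : κ → 𝕜}
    (hv : v ≠ 0) (hfix : A *ᵥ v = v) : IsPure A := by
  obtain ⟨c, hunit⟩ := exists_smul_star_dotProduct_self_eq_one hv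
  have hpure : IsPure (vecMulVec (c • v) (star (c • v))) := ⟨c • v, hunit, rfl⟩
  refine ⟨c • v, hunit, eq_of_mul_eq_right_of_trace_eq hA hpure.isStarProjection ?_ ?_⟩
  · rw [mul_vecMulVec, mulVec_smul, hfix]
  · rw [htrace, trace_vecMulVec, dotProduct_comm, hunit]

theorem isPure_of_isStarProjection_of_trace_eq_one (hP : IsStarProjection P)
    (htrace : P.trace = 1) : IsPure P := by
  classical
  have hpsd : P.PosSemidef := by
    simpa [← star_eq_conjTranspose, hP.isSelfAdjoint.star_eq, hP.isIdempotentElem.eq] using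
      posSemidef_conjTranspose_mul_self P
  obtain ⟨k, hk⟩ : ∃ k, P.col k ≠ 0 := by
    by_contra! h
    have : P = 0 := Matrix.ext fun i j => congrFun (h j) i
    simp [this] at htrace
  refine isPure_of_mulVec_eq_self hpsd htrace hk ?_
  rw [← mulVec_single_one, mulVec_mulVec, hP.isIdempotentElem.eq]

theorem star_dotProduct_eq_zero_of_vecMulVec_mul_vecMulVec_eq_zero {u v : κ → 𝕜} (hv : v ≠ 0)
    (hu : u ≠ 0) (h : vecMulVec v (star v) * vecMulVec u (star u) = 0) : star v ⬝ᵥ u = 0 := by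
  rw [vecMulVec_mul_vecMulVec, vecMulVec_eq_zero, smul_eq_zero, star_eq_zero] at h
  exact (h.resolve_left hv).resolve_right hu

end Matrix

section Complement

open Matrix

variable {𝕜 ι κ : Type*} [RCLike 𝕜] [Fintype ι] [DecidableEq κ] {ρ : ι → Matrix κ κ 𝕜}

/-- The part of the identity that is not resolved by the matrices `ρ n`. -/
def complement (ρ : ι → Matrix κ κ 𝕜) : Matrix κ κ 𝕜 :=
  1 - ∑ n, ρ n

theorem complement_apply_of_ne {i j : κ} (hij : i ≠ j) : complement ρ i j = -∑ n, ρ n i j := by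
  simp [complement, Matrix.sum_apply, hij]

theorem complement_apply_self_of_forall_eq {k : κ} {x : 𝕜} (hx : ∀ n, ρ n k k = x) :
    complement ρ k k = 1 - Fintype.card ι * x := by
  simp [complement, Matrix.sum_apply, hx]

end Complement

section Distinguishable

open Matrix

variable {𝕜 ι κ : Type*} [RCLike 𝕜] [Fintype κ] {ρ : ι → Matrix κ κ 𝕜}

/-- Density matrices indexed by `ι` that are pairwise perfectly distinguishable. -/
structure IsDistinguishable (ρ : ι → Matrix κ κ 𝕜) : Prop where
  posSemidef : ∀ n, (ρ n).PosSemidef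
  trace_eq_one : ∀ n, (ρ n).trace = 1
  mul_eq_zero : ∀ m n, m ≠ n → ρ m * ρ n = 0

namespace IsDistinguishable

variable [Fintype ι]

theorem mul_sum (hρ : IsDistinguishable ρ) (n : ι) : ρ n * ∑ m, ρ m = ρ n * ρ n := by
  rw [Finset.mul_sum, Finset.sum_eq_single_of_mem n (Finset.mem_univ n)]
  exact fun m _ hmn => hρ.mul_eq_zero n m hmn.symm

theorem sum_mul_sum (hρ : IsDistinguishable ρ) : (∑ n, ρ n) * ∑ n, ρ n = ∑ n, ρ n * ρ n := by
  simp only [Finset.sum_mul, hρ.mul_sum]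

theorem isHermitian_sum (hρ : IsDistinguishable ρ) : (∑ n, ρ n).IsHermitian :=
  (posSemidef_sum _ fun n _ => hρ.posSemidef n).isHermitian

section DecidableEq

variable [DecidableEq κ]

theorem mul_complement (hρ : IsDistinguishable ρ) (n : ι) :
    ρ n * complement ρ = ρ n - ρ n * ρ n := by
  rw [complement, mul_sub, mul_one, hρ.mul_sum]

theorem posSemidef_complement (hρ : IsDistinguishable ρ) : (complement ρ).PosSemidef := by
  refine posSemidef_one_sub_of_posSemidef_sub_mul_self hρ.isHermitian_sum ?_
  rw [hρ.sum_mul_sum, ← Finset.sum_sub_distrib]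
  refine posSemidef_sum _ fun n _ => ?_
  simpa only [hρ.trace_eq_one, one_smul] using
    posSemidef_trace_smul_sub_mul_self (hρ.posSemidef n)

theorem trace_complement (hρ : IsDistinguishable ρ) :
    (complement ρ).trace = Fintype.card κ - Fintype.card ι := by
  simp [complement, trace_sub, trace_sum, hρ.trace_eq_one]

theorem isPure_of_complement_apply_self_eq_zero (hρ : IsDistinguishable ρ) {k : κ}
    (hk : complement ρ k k = 0) {n : ι} (hne : ρ n k k ≠ 0) : IsPure (ρ n) := by
  have hcol : complement ρ *ᵥ Pi.single k 1 = 0 := by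
    rw [mulVec_single_one, col_eq_zero_of_diag_eq_zero hρ.posSemidef_complement hk]
  have hfix : ρ n *ᵥ (ρ n).col k = (ρ n).col k := by
    rw [← mulVec_single_one, mulVec_mulVec, eq_comm, ← sub_eq_zero, ← sub_mulVec,
      ← hρ.mul_complement, ← mulVec_mulVec, hcol, mulVec_zero]
  have hcol_ne : (ρ n).col k ≠ 0 := fun h => hne (congrFun h k)
  exact isPure_of_mulVec_eq_self (hρ.posSemidef n) (hρ.trace_eq_one n) hcol_ne hfix

theorem isPure_complement (hρ : IsDistinguishable ρ) (hpure : ∀ n, IsPure (ρ n))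
    (hcard : Fintype.card κ = Fintype.card ι + 1) : IsPure (complement ρ) := by
  have hsum : IsStarProjection (∑ n, ρ n) := by
    refine isStarProjection_iff'.2 ⟨?_, hρ.isHermitian_sum⟩
    rw [hρ.sum_mul_sum]
    exact Finset.sum_congr rfl fun n _ => (hpure n).isStarProjection.isIdempotentElem
  refine isPure_of_isStarProjection_of_trace_eq_one hsum.one_sub ?_
  exact hρ.trace_complement.trans (by rw [hcard, Nat.cast_add_one, add_sub_cancel_left])

theorem complement_mul_eq_zero (hρ : IsDistinguishable ρ) {n : ι} (hpure : IsPure (ρ n)) :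
    complement ρ * ρ n = 0 := by
  have h : ρ n * complement ρ = 0 := by
    rw [hρ.mul_complement, hpure.isStarProjection.isIdempotentElem, sub_self]
  simpa [hρ.posSemidef_complement.isHermitian.eq, (hρ.posSemidef n).isHermitian.eq] using
    congrArg conjTranspose h

theorem sum_complement_apply_mul_apply (hρ : IsDistinguishable ρ) {i j : κ} (hij : i ≠ j) :
    ∑ n, complement ρ i j * ρ n j i = -(‖complement ρ i j‖ : 𝕜) ^ 2 := by
  have hsum : ∑ n, ρ n j i = -complement ρ j i :=
    (neg_eq_iff_eq_neg.2 (complement_apply_of_ne hij.symm)).symm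
  rw [← Finset.mul_sum, hsum, mul_neg, ← hρ.posSemidef_complement.isHermitian.apply j i,
    ← starRingEnd_apply, RCLike.mul_conj]

end DecidableEq

theorem isPure_of_forall_apply_self_eq_one_div (hρ : IsDistinguishable ρ) {k : κ}
    (hk : ∀ n, ρ n k k = 1 / Fintype.card ι) (n : ι) : IsPure (ρ n) := by
  classical
  have : Nonempty ι := ⟨n⟩
  have hN : (Fintype.card ι : 𝕜) ≠ 0 := Nat.cast_ne_zero.2 Fintype.card_ne_zero
  refine hρ.isPure_of_complement_apply_self_eq_zero (k := k) ?_ (hk n ▸ one_div_ne_zero hN)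
  rw [complement_apply_self_of_forall_eq hk, mul_one_div_cancel hN, sub_self]

end IsDistinguishable

end Distinguishable

section Triangle

open Matrix

theorem four_mul_im_mul_conj_sq {x y z : ℂ} (h : x + y + z = 0) :
    4 * (y * conj x).im ^ 2 = 4 * (Complex.normSq x * Complex.normSq y) -
      (Complex.normSq x + Complex.normSq y - Complex.normSq z) ^ 2 := by
  obtain rfl : z = -(x + y) := eq_neg_of_add_eq_zero_right h
  simp only [Complex.normSq_apply, Complex.mul_im, Complex.conj_re, Complex.conj_im,
    Complex.neg_re, Complex.neg_im, Complex.add_re, Complex.add_im]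
  ring

theorem sum_univ_eq_add_add {κ R : Type*} [Fintype κ] [AddCommMonoid R] {a b c : κ} (hab : a ≠ b)
    (hac : a ≠ c) (hbc : b ≠ c) {f : κ → R} (hf : ∀ k, k ≠ a → k ≠ b → k ≠ c → f k = 0) :
    ∑ k, f k = f a + f b + f c := by
  classical
  rw [← Finset.sum_subset (Finset.subset_univ {a, b, c}) (by simpa using hf)]
  simp [hab, hac, hbc, add_assoc]

theorem IsPure.four_mul_im_mul_sq {κ : Type*} [Fintype κ] {M A : Matrix κ κ ℂ} (hM : IsPure M)
    (hA : IsPure A) (hMA : M * A = 0) {a b c : κ} (hab : a ≠ b) (hac : a ≠ c) (hbc : b ≠ c)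
    (hoff : ∀ k, k ≠ a → k ≠ b → k ≠ c → M k k = 0) {t : κ → ℝ}
    (ht : ∀ k, M k k * A k k = t k) :
    4 * (M a b * A b a).im ^ 2 = 4 * (t a * t b) - (t a + t b - t c) ^ 2 := by
  obtain ⟨v, hv, rfl⟩ := hM
  obtain ⟨u, hu, rfl⟩ := hA
  set side : κ → ℂ := fun k => star (v k) * u k
  have hside : ∀ k, Complex.normSq (side k) = t k := fun k => by
    apply Complex.ofReal_injective
    rw [← ht, Complex.normSq_eq_conj_mul_self]
    simp only [side, vecMulVec_apply, Pi.star_apply, star_mul', star_star, starRingEnd_apply]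
    ring
  have horth : star v ⬝ᵥ u = 0 :=
    star_dotProduct_eq_zero_of_vecMulVec_mul_vecMulVec_eq_zero
      (by rintro rfl; simp at hv) (by rintro rfl; simp at hu) hMA
  have hclosed : side a + side b + side c = 0 := by
    rw [← horth, dotProduct, sum_univ_eq_add_add hab hac hbc]
    · rfl
    · intro k hka hkb hkc
      have hvk : v k = 0 := by simpa [vecMulVec_apply] using hoff k hka hkb hkc
      simp [hvk]
  have harea : vecMulVec v (star v) a b * vecMulVec u (star u) b a = side b * conj (side a) := by
    simp only [side, vecMulVec_apply, Pi.star_apply, star_mul', star_star, starRingEnd_apply]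
    ring
  rw [harea, four_mul_im_mul_conj_sq hclosed, hside, hside, hside]

theorem heron_of_add_add_eq_one {R : Type*} [CommRing R] {x y z : R} (h : x + y + z = 1) :
    4 * (x * (1 - x) * (y * (1 - y))) - (x * (1 - x) + y * (1 - y) - z * (1 - z)) ^ 2 =
      4 * (x * y * z) := by
  obtain rfl : z = 1 - (x + y) := eq_sub_of_add_eq' h
  ring

theorem IsDistinguishable.card_mul_im_sq {ι κ : Type*} [Fintype ι] [Fintype κ] [DecidableEq κ]
    {ρ : ι → Matrix κ κ ℂ} (hρ : IsDistinguishable ρ) (hpure : ∀ n, IsPure (ρ n))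
    (hcard : Fintype.card κ = Fintype.card ι + 1) {p : κ → ℝ} (hdiag : ∀ n k, ρ n k k = p k)
    {a b c : κ} (hab : a ≠ b) (hac : a ≠ c) (hbc : b ≠ c)
    (hoff : ∀ k, k ≠ a → k ≠ b → k ≠ c → 1 - Fintype.card ι * p k = 0) (n : ι) :
    (Fintype.card ι * (complement ρ a b * ρ n b a).im) ^ 2 =
      (1 - Fintype.card ι * p a) * (1 - Fintype.card ι * p b) * (1 - Fintype.card ι * p c) := by
  set N := (Fintype.card ι : ℝ)
  set x : κ → ℝ := fun k => 1 - N * p k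
  have hcompl : ∀ k, complement ρ k k = x k := fun k => by
    simp [x, N, complement_apply_self_of_forall_eq fun n => hdiag n k]
  have hcompl_off : ∀ k, k ≠ a → k ≠ b → k ≠ c → complement ρ k k = 0 := fun k ha hb hc => by
    rw [hcompl, Complex.ofReal_eq_zero]
    exact hoff k ha hb hc
  have hsum : x a + x b + x c = 1 := by
    have htrace : complement ρ a a + complement ρ b b + complement ρ c c = 1 := by
      rw [← sum_univ_eq_add_add hab hac hbc hcompl_off]
      exact hρ.trace_complement.trans (by rw [hcard, Nat.cast_add_one, add_sub_cancel_left])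
    simp only [hcompl] at htrace
    exact_mod_cast htrace
  have hheron := (hρ.isPure_complement hpure hcard).four_mul_im_mul_sq (hpure n)
    (hρ.complement_mul_eq_zero (hpure n)) hab hac hbc hcompl_off (t := fun k => x k * p k)
    fun k => by rw [hcompl, hdiag, Complex.ofReal_mul]
  have hNt : ∀ k, N * (x k * p k) = x k * (1 - x k) := fun k => by ring
  have hscaled : 4 * (N * (complement ρ a b * ρ n b a).im) ^ 2 = 4 * (x a * x b * x c) := by
    rw [← heron_of_add_add_eq_one hsum]
    simp only [← hNt]
    linear_combination N ^ 2 * hheron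
  exact mul_left_cancel₀ four_ne_zero hscaled

end Triangle

theorem eq_zero_of_odd_card_of_sum_eq_zero {ι R : Type*} [Fintype ι] [CommRing R] [IsDomain R]
    [CharZero R] (hodd : Odd (Fintype.card ι)) {x : ι → R} {r : R} (hx : ∀ n, x n ^ 2 = r ^ 2)
    (hsum : ∑ n, x n = 0) : r = 0 := by
  have hsign : ∀ n, ∃ m : ℤ, x n = ((2 * m + 1 : ℤ) : R) * r := fun n => by
    rcases sq_eq_sq_iff_eq_or_eq_neg.1 (hx n) with h | h
    · exact ⟨0, by simp [h]⟩
    · exact ⟨-1, by simp [h]⟩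
  choose m hm using hsign
  have hodd_sum : Odd (∑ n, (2 * m n + 1)) := by
    rw [Finset.sum_add_distrib, ← Finset.mul_sum]
    exact (even_two_mul _).add_odd (by simpa using hodd)
  have hprod : ((∑ n, (2 * m n + 1) : ℤ) : R) * r = 0 := by
    rw [← hsum, Int.cast_sum, Finset.sum_mul]
    exact Finset.sum_congr rfl fun n _ => (hm n).symm
  refine (mul_eq_zero.1 hprod).resolve_left (Int.cast_ne_zero.2 fun h => ?_)
  exact Int.not_odd_zero (h ▸ hodd_sum)

theorem stmt_6_general {ι κ : Type*} [Fintype ι] [Fintype κ] (hodd : Odd (Fintype.card ι))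
    (hcard : Fintype.card κ = Fintype.card ι + 1) {p : κ → ℝ}
    (hthree : {k | p k ≠ 1 / Fintype.card ι}.ncard = 3) :
    ¬ ∃ ρ : ι → Matrix κ κ ℂ,
      (∀ n, (ρ n).PosSemidef) ∧ (∀ n, (ρ n).trace = 1) ∧
      (∀ n k, ρ n k k = (p k : ℂ)) ∧ (∀ m n, m ≠ n → ρ m * ρ n = 0) := by
  classical
  rintro ⟨ρ, hpsd, htrace, hdiag, horth⟩
  have hρ : IsDistinguishable ρ := ⟨hpsd, htrace, horth⟩
  have hpure : ∀ n, IsPure (ρ n) := by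
    obtain ⟨k, hk⟩ : ∃ k, p k = 1 / Fintype.card ι := by
      by_contra! hall
      have huniv := Set.eq_univ_of_forall (s := {k | p k ≠ 1 / Fintype.card ι}) hall
      rw [huniv, Set.ncard_univ, Nat.card_eq_fintype_card] at hthree
      grind
    exact hρ.isPure_of_forall_apply_self_eq_one_div (k := k) fun n => by simp [hdiag, hk]
  obtain ⟨a, b, c, hab, hac, hbc, habc⟩ := Set.ncard_eq_three.1 hthree
  have hsupp : ∀ k, 1 - Fintype.card ι * p k ≠ 0 ↔ k = a ∨ k = b ∨ k = c := fun k => by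
    have hN : (Fintype.card ι : ℝ) ≠ 0 := Nat.cast_ne_zero.2 hodd.pos.ne'
    rw [Ne, sub_eq_zero, eq_comm, mul_comm, ← eq_div_iff hN]
    exact Set.ext_iff.1 habc k
  set area : ι → ℝ := fun n => Fintype.card ι * (complement ρ a b * ρ n b a).im
  have harea_sq : ∀ n, area n ^ 2 = (1 - Fintype.card ι * p a) * (1 - Fintype.card ι * p b) *
      (1 - Fintype.card ι * p c) :=
    hρ.card_mul_im_sq hpure hcard hdiag hab hac hbc fun k ha hb hc =>
      not_not.1 <| (hsupp k).not.2 (by simp [ha, hb, hc])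
  have harea_sum : ∑ n, area n = 0 := by
    rw [← Finset.mul_sum, ← Complex.im_sum, hρ.sum_complement_apply_mul_apply hab]
    norm_cast
    exact mul_zero _
  obtain ⟨n⟩ : Nonempty ι := Fintype.card_pos_iff.1 hodd.pos
  have harea_zero : area n = 0 :=
    eq_zero_of_odd_card_of_sum_eq_zero hodd (fun m => (harea_sq m).trans (harea_sq n).symm)
      harea_sum
  have hprod := mul_ne_zero (mul_ne_zero ((hsupp a).2 (by simp)) ((hsupp b).2 (by simp)))
    ((hsupp c).2 (by simp))
  exact hprod (by rw [← harea_sq n, harea_zero, zero_pow two_ne_zero])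

theorem stmt_6 (d : ℕ) (hd : 2 < d) (heven : Even d)
    (p : Fin d → ℝ)
    (hp : ∀ k : Fin d, p k = if (k : ℕ) < 3 then 2 / (3 * ((d : ℝ) - 1)) else 1 / ((d : ℝ) - 1)) :
    (∀ k : Fin d, p k ≤ 1 / ((d : ℝ) - 1)) ∧
    ¬ ∃ ρ : Fin (d - 1) → Matrix (Fin d) (Fin d) ℂ,
      (∀ n, (ρ n).PosSemidef) ∧ (∀ n, (ρ n).trace = 1) ∧
      (∀ (n : Fin (d - 1)) (k : Fin d), ρ n k k = (p k : ℂ)) ∧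
      (∀ m n : Fin (d - 1), m ≠ n → ρ m * ρ n = 0) := by
  have hpos : 0 < 1 / ((d : ℝ) - 1) := by simpa using one_lt_two.trans hd
  have hp' : ∀ k : Fin d,
      p k = if (k : ℕ) < 3 then 2 / 3 * (1 / ((d : ℝ) - 1)) else 1 / ((d : ℝ) - 1) := fun k => by
    rw [hp, div_mul_div_comm, mul_one]
  have hne : ∀ k : Fin d, p k ≠ 1 / ((d : ℝ) - 1) ↔ (k : ℕ) < 3 := fun k => by
    rw [hp']
    split_ifs with hk
    · exact iff_of_true (by linarith) hk
    · exact iff_of_false (not_not.2 rfl) hk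
  refine ⟨fun k => ?_, stmt_6_general ?_ ?_ ?_⟩
  · rw [hp']
    split_ifs <;> linarith
  · rw [Fintype.card_fin]
    exact Nat.Even.sub_odd (by omega) heven odd_one
  · simp only [Fintype.card_fin]
    omega
  · simp only [Fintype.card_fin, Nat.cast_pred (by omega : 0 < d), hne]
    rw [Set.ncard_eq_toFinset_card', Set.toFinset_ofPred, Fin.card_filter_val_lt, min_eq_right hd]
end

section
/- Let p be a probability vector of dimension d, let g : Fin d → Fin d' be any function, and define the coarse-grained probability vector q of dimension d' by q j = ∑_{k : g k = j} p k. If there exist M orthonormal vectors φ⁽¹⁾, …, φ⁽ᴹ⁾ in ℂ^{d'} with |φ⁽ⁿ⁾ⱼ|² = q j for all j and n, then there exist M orthonormal vectors ψ⁽¹⁾, …, ψ⁽ᴹ⁾ in ℂᵈ with |ψ⁽ⁿ⁾ₖ|² = p k for all k and n. -/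
open scoped ComplexConjugate

/-!
Spread each amplitude `x j` over the fibre of `g` above `j` with real coefficients `√(p k / q j)`.
The squares of these coefficients sum to `1` over every fibre with `q j ≠ 0`, so this preserves all
inner products, while the squared modulus `q j` is redistributed as `p k`. On a fibre with `q j = 0`
the amplitudes vanish and `p` is zero as well, so nothing has to be distributed.
-/

section FiberLift

variable {α β 𝕜 : Type*} [Fintype α] [DecidableEq β] [RCLike 𝕜] {p : α → ℝ} {g : α → β}

/-- The coarse-graining of the weights `p` along `g`, i.e. the push-forward of `p` as a finite
measure. Neither nonnegativity nor normalization of `p` is built in. -/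
def coarseGrain (p : α → ℝ) (g : α → β) (j : β) : ℝ :=
  ∑ k with g k = j, p k

/-- The lift of an amplitude vector `x` from the coarse-grained index set to the fine one, each
entry being shared out over its fibre in proportion to `√p`. On fibres of total weight zero the
coefficient is `0`, by the convention `a / 0 = 0`. -/
noncomputable def fiberLift (p : α → ℝ) (g : α → β) (x : β → 𝕜) (k : α) : 𝕜 :=
  (√(p k / coarseGrain p g (g k)) : ℝ) * x (g k)

theorem coarseGrain_nonneg (hp : ∀ k, 0 ≤ p k) (j : β) : 0 ≤ coarseGrain p g j :=
  Finset.sum_nonneg fun k _ => hp k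

theorem le_coarseGrain (hp : ∀ k, 0 ≤ p k) (k : α) : p k ≤ coarseGrain p g (g k) :=
  Finset.single_le_sum (fun i _ => hp i) (by simp)

theorem sum_fiber_div_coarseGrain {j : β} (hj : coarseGrain p g j ≠ 0) :
    ∑ k with g k = j, p k / coarseGrain p g j = 1 := by
  rw [← Finset.sum_div]
  exact div_self hj

theorem conj_fiberLift_mul_fiberLift (hp : ∀ k, 0 ≤ p k) (x y : β → 𝕜) (k : α) :
    conj (fiberLift p g x k) * fiberLift p g y k =
      (p k / coarseGrain p g (g k) : ℝ) * (conj (x (g k)) * y (g k)) := by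
  rw [fiberLift, fiberLift, map_mul, RCLike.conj_ofReal, mul_mul_mul_comm, ← RCLike.ofReal_mul,
    Real.mul_self_sqrt (div_nonneg (hp k) (coarseGrain_nonneg hp _))]

theorem sum_fiber_conj_fiberLift_mul_fiberLift (hp : ∀ k, 0 ≤ p k) (x : β → 𝕜) {y : β → 𝕜}
    {j : β} (hy : coarseGrain p g j = 0 → y j = 0) :
    ∑ k with g k = j, conj (fiberLift p g x k) * fiberLift p g y k = conj (x j) * y j := by
  calc
    _ = ∑ k with g k = j, ((p k / coarseGrain p g j : ℝ) : 𝕜) * (conj (x j) * y j) := by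
      refine Finset.sum_congr rfl fun k hk => ?_
      rw [conj_fiberLift_mul_fiberLift hp, (Finset.mem_filter.mp hk).2]
    _ = ((∑ k with g k = j, p k / coarseGrain p g j : ℝ) : 𝕜) * (conj (x j) * y j) := by
      rw [← Finset.sum_mul, RCLike.ofReal_sum]
    _ = conj (x j) * y j := by
      by_cases hj : coarseGrain p g j = 0
      · simp [hy hj]
      · rw [sum_fiber_div_coarseGrain hj, RCLike.ofReal_one, one_mul]

theorem sum_conj_fiberLift_mul_fiberLift [Fintype β] (hp : ∀ k, 0 ≤ p k) (x : β → 𝕜) {y : β → 𝕜}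
    (hy : ∀ j, coarseGrain p g j = 0 → y j = 0) :
    ∑ k, conj (fiberLift p g x k) * fiberLift p g y k = ∑ j, conj (x j) * y j := by
  rw [← Finset.sum_fiberwise Finset.univ g]
  exact Finset.sum_congr rfl fun j _ => sum_fiber_conj_fiberLift_mul_fiberLift hp x (hy j)

theorem norm_fiberLift_sq (hp : ∀ k, 0 ≤ p k) {x : β → 𝕜} {k : α}
    (hx : ‖x (g k)‖ ^ 2 = coarseGrain p g (g k)) : ‖fiberLift p g x k‖ ^ 2 = p k := by
  rw [fiberLift, norm_mul, mul_pow, RCLike.norm_ofReal, sq_abs,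
    Real.sq_sqrt (div_nonneg (hp k) (coarseGrain_nonneg hp _)), hx]
  exact div_mul_cancel_of_imp fun h => le_antisymm (h ▸ le_coarseGrain hp k) (hp k)

end FiberLift

theorem stmt_7_general {ι α β 𝕜 : Type*} [Fintype α] [Fintype β] [DecidableEq β] [RCLike 𝕜]
    {p : α → ℝ} (hp : ∀ k, 0 ≤ p k) {g : α → β} {φ : ι → β → 𝕜}
    (hφ : ∀ n j, ‖φ n j‖ ^ 2 = coarseGrain p g j) :
    ∃ ψ : ι → α → 𝕜,
      (∀ m n, ∑ k, conj (ψ m k) * ψ n k = ∑ j, conj (φ m j) * φ n j) ∧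
      ∀ n k, ‖ψ n k‖ ^ 2 = p k := by
  have φ_eq_zero (n : ι) (j : β) (hj : coarseGrain p g j = 0) : φ n j = 0 := by
    rwa [← hφ n j, sq_eq_zero_iff, norm_eq_zero] at hj
  exact ⟨fun n => fiberLift p g (φ n),
    fun m n => sum_conj_fiberLift_mul_fiberLift hp (φ m) (φ_eq_zero n),
    fun n k => norm_fiberLift_sq hp (hφ n (g k))⟩

theorem stmt_7 (d d' M : ℕ)
    (p : Fin d → ℝ) (hp0 : ∀ k, 0 ≤ p k) (hp1 : ∑ k, p k = 1)
    (g : Fin d → Fin d')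
    (q : Fin d' → ℝ)
    (hq : ∀ j : Fin d', q j = ∑ k ∈ Finset.univ.filter (fun k => g k = j), p k)
    (φ : Fin M → Fin d' → ℂ)
    (hφorth : ∀ m n : Fin M, ∑ j, conj (φ m j) * φ n j = if m = n then 1 else 0)
    (hφmod : ∀ (n : Fin M) (j : Fin d'), ‖φ n j‖ ^ 2 = q j) :
    ∃ ψ : Fin M → Fin d → ℂ,
      (∀ m n : Fin M, ∑ k, conj (ψ m k) * ψ n k = if m = n then 1 else 0) ∧
      (∀ (n : Fin M) (k : Fin d), ‖ψ n k‖ ^ 2 = p k) := by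
  obtain ⟨ψ, hψ, hψmod⟩ := stmt_7_general hp0 fun n j => (hφmod n j).trans (hq j)
  exact ⟨ψ, fun m n => (hψ m n).trans (hφorth m n), hψmod⟩
end

section
/- Let d be a prime number. Then there exists ε > 0 such that for every probability vector p of dimension d with total variation distance (1/2)·∑ₖ |p k − 1/d| ≤ ε from the uniform distribution, there exist d−1 orthonormal vectors ψ⁽¹⁾, …, ψ⁽ᵈ⁻¹⁾ in ℂᵈ with |ψ⁽ⁿ⁾ₖ|² = p k for all k and n. (Equivalently, for prime d a total-variation ball around the uniform distribution is contained in the distinguishability region 𝒜^{d−1}_d.) -/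
open scoped ComplexConjugate

/-!
Write `ψ⁽ⁿ⁾ₖ = √(pₖ) φₙ(k) exp(i θₙ(k))`, where `φₙ` are distinct characters of `ℤ/d` and the real
phases `θ` are to be found. Orthogonality holds at uniform `p` and `θ = 0`, so by the open mapping
form of the inverse function theorem it suffices that the overlaps have a surjective derivative
there. In Fourier space this asks, for each nonzero frequency `j`, to prescribe the differences
`A φ - A (φ - j)` whenever `φ` and `φ - j` are both among the `φₙ`. Telescoping solves this as soon
as the `φₙ` contain no coset of a nontrivial cyclic subgroup, that is, no closed loop of step `j`;
for `d` prime every proper subset of the dual group qualifies.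
-/

open Filter Topology

section CosetFree

variable {Γ : Type*} [AddGroup Γ]

/-- A set containing no coset of a nontrivial cyclic subgroup. It is encoded as: every walk with
constant nonzero step `-j` leaves `S`, which is the same notion when all elements have finite
order. -/
def CosetFree (S : Set Γ) : Prop :=
  ∀ j ≠ 0, ∀ n, ∃ t : ℕ, n - t • j ∉ S

theorem CosetFree.exists_sub_eq {M : Type*} [AddCommGroup M] {S : Set Γ} (hS : CosetFree S)
    {j : Γ} (hj : j ≠ 0) (g : Γ → M) : ∃ a : Γ → M, ∀ n ∈ S, a n - a (n - j) = g n := by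
  classical
  refine ⟨fun n => ∑ s ∈ Finset.range (Nat.find (hS j hj n)), g (n - s • j), fun n hn => ?_⟩
  have shift (t : ℕ) : n - (t + 1) • j = n - j - t • j := by
    rw [succ_nsmul, sub_add_eq_sub_sub_swap]
  have exit_time_succ : Nat.find (hS j hj n) = Nat.find (hS j hj (n - j)) + 1 := by
    have h : ∃ t : ℕ, n - (t + 1) • j ∉ S := by simpa only [shift] using hS j hj (n - j)
    rw [Nat.find_comp_succ _ h (by simpa using hn)]
    simp only [shift]
  simp only [exit_time_succ, Finset.sum_range_succ', shift, zero_smul, sub_zero,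
    add_sub_cancel_left]

theorem cosetFree_of_ncard_lt_minFac [Finite Γ] {S : Set Γ}
    (hS : S.ncard < (Nat.card Γ).minFac) : CosetFree S := by
  intro j hj n
  by_contra! walk_mem
  have coset_subset : (n - ·) '' (AddSubgroup.zmultiples j : Set Γ) ⊆ S := by
    rintro _ ⟨x, hx, rfl⟩
    obtain ⟨t, rfl⟩ := mem_multiples_iff_mem_zmultiples.mpr hx
    exact walk_mem t
  have order_le : addOrderOf j ≤ S.ncard := by
    rw [← Nat.card_zmultiples, ← SetLike.coe_sort_coe, Nat.card_coe_set_eq,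
      ← Set.ncard_image_of_injective _ (sub_right_injective (b := n))]
    exact Set.ncard_le_ncard coset_subset
  have two_le_order : 2 ≤ addOrderOf j :=
    (Nat.two_le_iff _).mpr ⟨(addOrderOf_pos j).ne', mt AddMonoid.addOrderOf_eq_one_iff.mp hj⟩
  exact (order_le.trans_lt hS).not_ge
    (Nat.minFac_le_of_dvd two_le_order (addOrderOf_dvd_natCard j))

end CosetFree

section Characters

variable {G : Type*} [AddCommGroup G] [Fintype G]

theorem exists_sum_addChar_mul_eq (A : AddChar G ℂ → ℂ) :
    ∃ f : G → ℂ, ∀ φ : AddChar G ℂ, ∑ k, φ k * f k = A φ := by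
  classical
  refine ⟨fun k => (Fintype.card G : ℂ)⁻¹ * ∑ χ : AddChar G ℂ, χ (-k) * A χ, fun φ => ?_⟩
  have hcard : (Fintype.card G : ℂ) ≠ 0 := Nat.cast_ne_zero.mpr Fintype.card_ne_zero
  calc ∑ k, φ k * ((Fintype.card G : ℂ)⁻¹ * ∑ χ : AddChar G ℂ, χ (-k) * A χ)
      = (Fintype.card G : ℂ)⁻¹ * ∑ χ, (∑ k, (φ - χ) k) * A χ := by
        simp only [Finset.mul_sum, Finset.sum_mul, AddChar.sub_apply]
        rw [Finset.sum_comm]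
        exact Finset.sum_congr rfl fun χ _ => Finset.sum_congr rfl fun k _ => by ring
    _ = A φ := by
        simp [AddChar.sum_eq_ite, sub_eq_zero, hcard]

theorem CosetFree.exists_sum_sub_mul_sub_eq {S : Set (AddChar G ℂ)} (hS : CosetFree S)
    (c : AddChar G ℂ → AddChar G ℂ → ℂ) :
    ∃ η : AddChar G ℂ → G → ℂ, ∀ φ ∈ S, ∀ χ, φ ≠ χ →
      ∑ k, (φ - χ) k * (η φ k - η χ k) = c φ χ := by
  have exists_antidifference (j : AddChar G ℂ) :
      ∃ a : AddChar G ℂ → ℂ, j ≠ 0 → ∀ φ ∈ S, a φ - a (φ - j) = c φ (φ - j) := by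
    by_cases hj : j = 0
    · exact ⟨0, fun h => absurd hj h⟩
    · obtain ⟨a, ha⟩ := hS.exists_sub_eq hj fun φ => c φ (φ - j)
      exact ⟨a, fun _ => ha⟩
  choose a ha using exists_antidifference
  choose η hη using fun φ => exists_sum_addChar_mul_eq fun j => a j φ
  refine ⟨η, fun φ hφ χ hne => ?_⟩
  simp only [mul_sub, Finset.sum_sub_distrib, hη]
  simpa only [sub_sub_cancel] using ha (φ - χ) (sub_ne_zero.mpr hne) φ hφ

-- The conjugate of the equation at `(χ, φ)` is the equation at `(φ, χ)` with `conj η` for `η`,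
-- so the real part of a complex solution is again a solution.
theorem CosetFree.exists_real_sum_sub_mul_sub_eq {S : Set (AddChar G ℂ)} (hS : CosetFree S)
    {c : AddChar G ℂ → AddChar G ℂ → ℂ} (hc : ∀ φ χ, c χ φ = -conj (c φ χ)) :
    ∃ η : AddChar G ℂ → G → ℝ, ∀ φ ∈ S, ∀ χ ∈ S, φ ≠ χ →
      ∑ k, (φ - χ) k * ((η φ k - η χ k : ℝ) : ℂ) = c φ χ := by
  obtain ⟨η, hη⟩ := hS.exists_sum_sub_mul_sub_eq c
  refine ⟨fun φ k => (η φ k).re, fun φ hφ χ hχ hne => ?_⟩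
  have conj_solution : ∑ k, (φ - χ) k * conj (η φ k - η χ k) = c φ χ := by
    have conj_swap (k : G) : conj ((χ - φ) k) = (φ - χ) k := by
      rw [← AddChar.map_neg_eq_conj, ← AddChar.neg_apply, neg_sub]
    rw [hc χ φ, ← hη χ hχ φ hne.symm, map_sum, ← Finset.sum_neg_distrib]
    refine Finset.sum_congr rfl fun k _ => ?_
    rw [map_mul, conj_swap, ← mul_neg, ← map_neg, neg_sub]
  have re_eq_average (z : ℂ) : (z.re : ℂ) = (z + conj z) / 2 := by
    rw [Complex.add_conj]; push_cast; ring
  simp only [← Complex.sub_re, re_eq_average, mul_div_assoc', mul_add, ← Finset.sum_div,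
    Finset.sum_add_distrib, conj_solution, hη φ hφ χ hne]
  ring

end Characters

/-- Pairs `m < n`, indexing the independent overlaps of a family of vectors. -/
abbrev StrictPair (ι : Type*) [LT ι] : Type _ :=
  {x : ι × ι // x.1 < x.2}

theorem CosetFree.exists_strictPair_sum_eq {G ι : Type*} [AddCommGroup G] [Fintype G]
    [LinearOrder ι] {φ : ι → AddChar G ℂ} (hφ : Function.Injective φ)
    (hS : CosetFree (Set.range φ)) (c : StrictPair ι → ℂ) :
    ∃ η : ι → G → ℝ, ∀ x : StrictPair ι,
      ∑ k, (φ x.1.1 - φ x.1.2) k * ((η x.1.1 k - η x.1.2 k : ℝ) : ℂ) = c x := by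
  let pairChar : StrictPair ι → AddChar G ℂ × AddChar G ℂ := fun x => (φ x.1.1, φ x.1.2)
  have pairChar_injective : Function.Injective pairChar :=
    (hφ.prodMap hφ).comp Subtype.val_injective
  let c₀ : AddChar G ℂ × AddChar G ℂ → ℂ := Function.extend pairChar c fun _ => 0
  obtain ⟨η, hη⟩ := hS.exists_real_sum_sub_mul_sub_eq
    (c := fun α β => c₀ (α, β) - conj (c₀ (β, α))) fun α β => by simp
  refine ⟨fun n => η (φ n), fun x => ?_⟩
  have c₀_pair : c₀ (φ x.1.1, φ x.1.2) = c x := pairChar_injective.extend_apply c _ x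
  have c₀_swap : c₀ (φ x.1.2, φ x.1.1) = 0 := by
    refine Function.extend_apply' c _ _ ?_
    rintro ⟨y, hy⟩
    obtain ⟨h₁, h₂⟩ := Prod.mk.inj hy
    exact lt_asymm x.2 (hφ h₁ ▸ hφ h₂ ▸ y.2)
  rw [hη _ (Set.mem_range_self _) _ (Set.mem_range_self _) (hφ.ne x.2.ne), c₀_pair, c₀_swap,
    map_zero, sub_zero]

section PhaseSum

variable {K : Type*} [Fintype K]

/-- The sum `∑ₖ f(k) pₖ exp(i δ(k))`: the overlap of two vectors with common squared moduli `p`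
whose relative phases are `f` times `exp(i δ)`. -/
noncomputable def phaseSum (f : K → ℂ) (p δ : K → ℝ) : ℂ :=
  ∑ k, f k * (p k * Complex.exp (δ k * Complex.I))

theorem contDiff_phaseSum {E : Type*} [NormedAddCommGroup E] [NormedSpace ℝ E] (f : K → ℂ)
    {n : WithTop ℕ∞} {p δ : E → K → ℝ} (hp : ContDiff ℝ n p) (hδ : ContDiff ℝ n δ) :
    ContDiff ℝ n fun y => phaseSum f (p y) (δ y) := by
  have ofReal : ContDiff ℝ n ((↑) : ℝ → ℂ) := Complex.ofRealCLM.contDiff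
  unfold phaseSum
  fun_prop

theorem hasDerivAt_phaseSum_line (f : K → ℂ) (p q η : K → ℝ) :
    HasDerivAt (fun t : ℝ => phaseSum f (p + t • q) (t • η))
      (∑ k, f k * (q k + p k * (η k * Complex.I))) 0 := by
  refine HasDerivAt.fun_sum fun k _ => HasDerivAt.const_mul _ ?_
  have weight : HasDerivAt (fun t : ℝ => (((p + t • q) k : ℝ) : ℂ)) (q k) 0 := by
    simpa using (((hasDerivAt_id (0 : ℝ)).mul_const (q k)).const_add (p k)).ofReal_comp
  have angle : HasDerivAt (fun t : ℝ => (((t • η) k : ℝ) : ℂ) * Complex.I)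
      (η k * Complex.I) 0 := by
    simpa using ((hasDerivAt_id (0 : ℝ)).mul_const (η k)).ofReal_comp.mul_const Complex.I
  simpa using weight.fun_mul angle.cexp

theorem phaseSum_addChar_const_zero {G : Type*} [AddCommGroup G] [Fintype G]
    {φ : AddChar G ℂ} (hφ : φ ≠ 0) (a : ℝ) : phaseSum φ (Function.const G a) 0 = 0 := by
  simp [phaseSum, ← Finset.sum_mul, AddChar.sum_eq_zero_iff_ne_zero.mpr hφ]

end PhaseSum

section OverlapMap

variable {G ι : Type*} [AddCommGroup G] [Fintype G] [LinearOrder ι]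

/-- The map `(p, θ) ↦ (p, overlaps)`, where the vectors `√(pₖ) φₙ(k) exp(i θₙ(k))` have the given
overlaps. Keeping `p` in the output turns solving for `θ` at fixed `p` into a local surjectivity
statement. -/
noncomputable def overlapMap (φ : ι → AddChar G ℂ) (y : (G → ℝ) × (ι → G → ℝ)) :
    (G → ℝ) × (StrictPair ι → ℂ) :=
  (y.1, fun x => phaseSum (φ x.1.1 - φ x.1.2) y.1 (y.2 x.1.1 - y.2 x.1.2))

theorem overlapMap_const_zero {φ : ι → AddChar G ℂ} (hφ : Function.Injective φ) (a : ℝ) :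
    overlapMap φ (Function.const G a, 0) = (Function.const G a, 0) := by
  refine Prod.ext rfl (funext fun x => ?_)
  simpa [overlapMap] using
    phaseSum_addChar_const_zero (sub_ne_zero.mpr (hφ.ne x.2.ne)) a

theorem contDiff_overlapMap [Fintype ι] (φ : ι → AddChar G ℂ) {n : WithTop ℕ∞} :
    ContDiff ℝ n (overlapMap φ) := by
  refine contDiff_fst.prodMk (contDiff_pi.mpr fun x => ?_)
  have phase (m : ι) : ContDiff ℝ n fun y : (G → ℝ) × (ι → G → ℝ) => y.2 m :=
    (contDiff_apply ℝ (G → ℝ) m).comp contDiff_snd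
  exact contDiff_phaseSum _ contDiff_fst ((phase x.1.1).sub (phase x.1.2))

variable [Finite ι]

theorem fderiv_overlapMap_const_zero_apply (φ : ι → AddChar G ℂ) (a : ℝ) (q : G → ℝ)
    (η : ι → G → ℝ) :
    fderiv ℝ (overlapMap φ) (Function.const G a, 0) (q, η) =
      (q, fun x => ∑ k, (φ x.1.1 - φ x.1.2) k *
        (q k + a * (((η x.1.1 k - η x.1.2 k : ℝ) : ℂ) * Complex.I))) := by
  have := Fintype.ofFinite ι
  have line_deriv := (((contDiff_overlapMap φ (n := 1)).differentiable one_ne_zero)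
    (Function.const G a, 0)).hasFDerivAt.hasLineDerivAt (q, η)
  refine HasDerivAt.unique line_deriv (HasDerivAt.prodMk ?_ (hasDerivAt_pi.mpr fun x => ?_))
  · simpa using ((hasDerivAt_id (0 : ℝ)).smul_const q).const_add (Function.const G a)
  · simpa [smul_sub] using hasDerivAt_phaseSum_line (φ x.1.1 - φ x.1.2 : AddChar G ℂ)
      (Function.const G a) q (η x.1.1 - η x.1.2)

theorem CosetFree.range_fderiv_overlapMap_eq_top {φ : ι → AddChar G ℂ}
    (hφ : Function.Injective φ) (hS : CosetFree (Set.range φ)) {a : ℝ} (ha : a ≠ 0) :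
    (fderiv ℝ (overlapMap φ) (Function.const G a, 0)).range = ⊤ := by
  rw [LinearMap.range_eq_top]
  rintro ⟨q, c⟩
  obtain ⟨η, hη⟩ := hS.exists_strictPair_sum_eq hφ fun x =>
    (c x - ∑ k, (φ x.1.1 - φ x.1.2) k * q k) / (a * Complex.I)
  refine ⟨(q, η), (fderiv_overlapMap_const_zero_apply φ a q η).trans
    (Prod.ext rfl (funext fun x => ?_))⟩
  have haI : (a : ℂ) * Complex.I ≠ 0 :=
    mul_ne_zero (Complex.ofReal_ne_zero.mpr ha) Complex.I_ne_zero
  calc ∑ k, (φ x.1.1 - φ x.1.2) k *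
        (q k + a * (((η x.1.1 k - η x.1.2 k : ℝ) : ℂ) * Complex.I))
      = ∑ k, (φ x.1.1 - φ x.1.2) k * q k + a * Complex.I *
          ∑ k, (φ x.1.1 - φ x.1.2) k * ((η x.1.1 k - η x.1.2 k : ℝ) : ℂ) := by
        rw [Finset.mul_sum, ← Finset.sum_add_distrib]
        exact Finset.sum_congr rfl fun k _ => by ring
    _ = c x := by rw [hη, mul_div_cancel₀ _ haI, add_sub_cancel]

theorem CosetFree.eventually_exists_phaseSum_eq_zero {φ : ι → AddChar G ℂ}
    (hφ : Function.Injective φ) (hS : CosetFree (Set.range φ)) {a : ℝ} (ha : a ≠ 0) :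
    ∀ᶠ p in 𝓝 (Function.const G a), ∃ θ : ι → G → ℝ, ∀ m n, m < n →
      phaseSum (φ m - φ n) p (θ m - θ n) = 0 := by
  have := Fintype.ofFinite ι
  have map_nhds := ((contDiff_overlapMap φ).contDiffAt.hasStrictFDerivAt
    one_ne_zero).map_nhds_eq_of_surj (hS.range_fderiv_overlapMap_eq_top hφ ha)
  rw [overlapMap_const_zero hφ] at map_nhds
  have range_mem : ∀ᶠ z in 𝓝 (Function.const G a, 0), z ∈ Set.range (overlapMap φ) :=
    map_nhds ▸ range_mem_map
  filter_upwards [range_mem.curry_nhds] with p hp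
  obtain ⟨⟨_, θ⟩, h⟩ := hp.self_of_nhds
  obtain ⟨rfl, overlaps_eq⟩ := Prod.mk.inj h
  exact ⟨θ, fun m n hmn => congrFun overlaps_eq ⟨(m, n), hmn⟩⟩

end OverlapMap

section PhaseVector

variable {G : Type*} [AddCommGroup G]

/-- The vector with squared moduli `p` and phases `φ(k) exp(i θ(k))`. -/
noncomputable def phaseVector (p : G → ℝ) (φ : AddChar G ℂ) (θ : G → ℝ) (k : G) : ℂ :=
  √(p k) * φ k * Complex.exp (θ k * Complex.I)

theorem norm_phaseVector_sq [Finite G] {p : G → ℝ} {k : G} (hp : 0 ≤ p k) (φ : AddChar G ℂ)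
    (θ : G → ℝ) :
    ‖phaseVector p φ θ k‖ ^ 2 = p k := by
  simp [phaseVector, AddChar.norm_apply, Complex.norm_exp_ofReal_mul_I, Real.sq_sqrt hp]

variable [Fintype G]

theorem sum_conj_phaseVector_mul {p : G → ℝ} (hp : ∀ k, 0 ≤ p k) (φ χ : AddChar G ℂ)
    (θ τ : G → ℝ) :
    ∑ k, conj (phaseVector p χ τ k) * phaseVector p φ θ k = phaseSum (φ - χ) p (θ - τ) := by
  refine Finset.sum_congr rfl fun k _ => ?_
  have sqrt_mul_self : (√(p k) : ℂ) * √(p k) = p k := by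
    rw [← Complex.ofReal_mul, Real.mul_self_sqrt (hp k)]
  have exp_sub : Complex.exp (((θ - τ) k : ℝ) * Complex.I) =
      conj (Complex.exp (τ k * Complex.I)) * Complex.exp (θ k * Complex.I) := by
    rw [← Complex.exp_conj, ← Complex.exp_add]
    congr 1
    simp
    ring
  rw [AddChar.sub_apply, AddChar.map_neg_eq_conj, exp_sub, ← sqrt_mul_self]
  simp only [phaseVector, map_mul, Complex.conj_ofReal]
  ring

theorem sum_conj_phaseVector_mul_self {p : G → ℝ} (hp : ∀ k, 0 ≤ p k) (φ : AddChar G ℂ)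
    (θ : G → ℝ) :
    ∑ k, conj (phaseVector p φ θ k) * phaseVector p φ θ k = (∑ k, p k : ℝ) := by
  simp [sum_conj_phaseVector_mul hp, phaseSum]

end PhaseVector

theorem sum_conj_mul_eq_zero_symm {K : Type*} [Fintype K] {u v : K → ℂ}
    (h : ∑ k, conj (u k) * v k = 0) : ∑ k, conj (v k) * u k = 0 := by
  simpa [mul_comm] using congrArg conj h

theorem CosetFree.eventually_exists_orthogonal {G ι : Type*} [AddCommGroup G] [Fintype G]
    [LinearOrder ι] [Finite ι] {φ : ι → AddChar G ℂ} (hφ : Function.Injective φ)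
    (hS : CosetFree (Set.range φ)) {a : ℝ} (ha : a ≠ 0) :
    ∀ᶠ p in 𝓝 (Function.const G a), (∀ k, 0 ≤ p k) →
      ∃ ψ : ι → G → ℂ,
        (∀ m n, ∑ k, conj (ψ m k) * ψ n k = if m = n then ((∑ k, p k : ℝ) : ℂ) else 0) ∧
        ∀ n k, ‖ψ n k‖ ^ 2 = p k := by
  filter_upwards [hS.eventually_exists_phaseSum_eq_zero hφ ha] with p ⟨θ, hθ⟩ hp
  have orthogonal_of_lt (m n : ι) (hnm : n < m) :
      ∑ k, conj (phaseVector p (φ m) (θ m) k) * phaseVector p (φ n) (θ n) k = 0 := by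
    rw [sum_conj_phaseVector_mul hp, hθ n m hnm]
  refine ⟨fun n => phaseVector p (φ n) (θ n), fun m n => ?_,
    fun n k => norm_phaseVector_sq (hp k) _ _⟩
  rcases lt_trichotomy m n with hlt | rfl | hgt
  · rw [if_neg hlt.ne, sum_conj_mul_eq_zero_symm (orthogonal_of_lt n m hlt)]
  · rw [if_pos rfl, sum_conj_phaseVector_mul_self hp]
  · rw [if_neg hgt.ne', orthogonal_of_lt m n hgt]

theorem exists_injective_cosetFree_range_addChar (G : Type*) [AddCommGroup G] [Finite G] :
    ∃ φ : Fin ((Nat.card G).minFac - 1) → AddChar G ℂ,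
      Function.Injective φ ∧ CosetFree (Set.range φ) := by
  have card_dual : Nat.card (AddChar G ℂ) = Nat.card G := by
    cases nonempty_fintype G
    simp
  have minFac_pos := (Nat.card G).minFac_pos
  have minFac_le := Nat.minFac_le (Nat.card_pos (α := G))
  obtain ⟨φ⟩ : Nonempty (Fin ((Nat.card G).minFac - 1) ↪ AddChar G ℂ) := by
    rw [Function.Embedding.nonempty_iff_card_le, Fintype.card_fin, ← Nat.card_eq_fintype_card]
    omega
  refine ⟨φ, φ.injective, cosetFree_of_ncard_lt_minFac ?_⟩
  rw [Set.ncard_range_of_injective φ.injective, Nat.card_fin, card_dual]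
  omega

theorem dist_le_sum_abs_sub {K : Type*} [Fintype K] (p q : K → ℝ) :
    dist p q ≤ ∑ k, |p k - q k| :=
  (dist_pi_le_iff (Finset.sum_nonneg fun _ _ => abs_nonneg _)).mpr fun k =>
    Finset.single_le_sum (f := fun k => |p k - q k|) (fun _ _ => abs_nonneg _)
      (Finset.mem_univ k)

theorem stmt_8_general (d : ℕ) [NeZero d] :
    ∃ ε > (0 : ℝ), ∀ p : Fin d → ℝ,
      (∀ k, 0 ≤ p k) → (∑ k, p k = 1) →
      (1 / 2) * ∑ k, |p k - 1 / (d : ℝ)| ≤ ε →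
      ∃ ψ : Fin (d.minFac - 1) → Fin d → ℂ,
        (∀ m n : Fin (d.minFac - 1), ∑ k, conj (ψ m k) * ψ n k = if m = n then 1 else 0) ∧
        (∀ (n : Fin (d.minFac - 1)) (k : Fin d), ‖ψ n k‖ ^ 2 = p k) := by
  obtain ⟨φ, φ_injective, φ_cosetFree⟩ := exists_injective_cosetFree_range_addChar (Fin d)
  have near_uniform := φ_cosetFree.eventually_exists_orthogonal φ_injective
    (a := 1 / (d : ℝ)) (one_div_ne_zero (NeZero.ne _))
  rw [Nat.card_fin] at near_uniform
  obtain ⟨ε, ε_pos, exists_orthogonal⟩ := Metric.eventually_nhds_iff.mp near_uniform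
  refine ⟨ε / 4, by positivity, fun p hp hsum htv => ?_⟩
  have dist_uniform_lt : dist p (Function.const (Fin d) (1 / (d : ℝ))) < ε :=
    calc dist p (Function.const (Fin d) (1 / (d : ℝ)))
        ≤ ∑ k, |p k - 1 / (d : ℝ)| := dist_le_sum_abs_sub _ _
      _ < ε := by linarith
  simpa only [hsum, Complex.ofReal_one] using exists_orthogonal dist_uniform_lt hp

theorem stmt_8 (d : ℕ) (hd : d.Prime) :
    ∃ ε > (0 : ℝ), ∀ p : Fin d → ℝ,
      (∀ k, 0 ≤ p k) → (∑ k, p k = 1) →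
      (1 / 2) * ∑ k, |p k - 1 / (d : ℝ)| ≤ ε →
      ∃ ψ : Fin (d - 1) → Fin d → ℂ,
        (∀ m n : Fin (d - 1), ∑ k, conj (ψ m k) * ψ n k = if m = n then 1 else 0) ∧
        (∀ (n : Fin (d - 1)) (k : Fin d), ‖ψ n k‖ ^ 2 = p k) := by
  have : NeZero d := ⟨hd.ne_zero⟩
  have orthonormal := stmt_8_general d
  rwa [hd.minFac_eq] at orthonormal
end

section
/- Let X⁽¹⁾, …, X⁽ᴹ⁾ be d×d correlation matrices and let Ψ be a d×d complex matrix with Frobenius norm 1 (encoding a bipartite pure state with coefficients Ψ_{k,k'}). For each n define the (d·d)×(d·d) matrix ρ⁽ⁿ⁾, indexed by pairs, with entries ρ⁽ⁿ⁾_{(k,k'),(l,l')} = X⁽ⁿ⁾_{k,l} · Ψ_{k,k'} · conj(Ψ_{l,l'}). If ρ⁽ᵐ⁾ · ρ⁽ⁿ⁾ = 0 for all m ≠ n, then there exists a unit vector ψ ∈ ℂᵈ such that the d×d matrices σ⁽ⁿ⁾ with entries σ⁽ⁿ⁾_{k,l} = X⁽ⁿ⁾_{k,l} · ψ_k · conj(ψ_l)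 satisfy σ⁽ᵐ⁾ · σ⁽ⁿ⁾ = 0 for all m ≠ n. (Entanglement does not help to distinguish Schur-product channels.) -/
open scoped Matrix ComplexConjugate ComplexOrder

/-!
Entry `((i, k), (j, k'))` of a product of two bipartite outputs is `Ψ (i, k) * conj (Ψ (j, k'))`
times `∑ l, A i l * B l j * p l`, where `p l = ∑ k, ‖Ψ (l, k)‖ ^ 2` is the marginal weight of `l`.
The sum does not see the ancilla indices, so vanishing of the product depends on `Ψ` only through
`p` and its support, and the single-system vector with amplitudes `√(p l)` has the same weights.
-/

section CommSemiring

variable {ι R : Type*} [CommSemiring R] [StarRing R]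

/-- The output `A ⊙ v v*` of the Schur-product map of `A` on the (unnormalised) pure state `v`.
For a bipartite vector `v : ι × κ → R`, tensoring the map with the identity on `κ` replaces `A` by
`A.submatrix Prod.fst Prod.fst`. -/
def schurPureOutput (A : Matrix ι ι R) (v : ι → R) : Matrix ι ι R :=
  Matrix.of fun i j => A i j * v i * conj (v j)

variable [Fintype ι]

lemma schurPureOutput_mul_apply (A B : Matrix ι ι R) (v : ι → R) (i j : ι) :
    (schurPureOutput A v * schurPureOutput B v) i j =
      v i * conj (v j) * ∑ l, A i l * B l j * (v l * conj (v l)) := by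
  rw [Matrix.mul_apply, Finset.mul_sum]
  refine Finset.sum_congr rfl fun l _ => ?_
  simp only [schurPureOutput, Matrix.of_apply]
  ring

lemma schurPureOutput_mul_eq_zero_iff [NoZeroDivisors R] (A B : Matrix ι ι R) (v : ι → R) :
    schurPureOutput A v * schurPureOutput B v = 0 ↔
      ∀ i j, v i ≠ 0 → v j ≠ 0 → ∑ l, A i l * B l j * (v l * conj (v l)) = 0 := by
  simp only [← Matrix.ext_iff, schurPureOutput_mul_apply, Matrix.zero_apply, mul_eq_zero,
    starRingEnd_apply, star_eq_zero, or_assoc]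
  simp only [or_iff_not_imp_left, ne_eq]

end CommSemiring

section RCLike

variable {ι κ 𝕜 : Type*} [RCLike 𝕜] [Fintype κ]

/-- The vector of nonnegative amplitudes on the first factor whose squares are the marginal weights
of the bipartite vector `Ψ`. -/
noncomputable def marginalAmplitude (Ψ : ι × κ → 𝕜) (i : ι) : 𝕜 :=
  (√(∑ k, ‖Ψ (i, k)‖ ^ 2) : ℝ)

lemma norm_marginalAmplitude_sq (Ψ : ι × κ → 𝕜) (i : ι) :
    ‖marginalAmplitude Ψ i‖ ^ 2 = ∑ k, ‖Ψ (i, k)‖ ^ 2 := by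
  rw [marginalAmplitude, RCLike.norm_ofReal, sq_abs, Real.sq_sqrt (by positivity)]

lemma marginalAmplitude_mul_conj (Ψ : ι × κ → 𝕜) (i : ι) :
    marginalAmplitude Ψ i * conj (marginalAmplitude Ψ i) = ∑ k, Ψ (i, k) * conj (Ψ (i, k)) := by
  simp only [RCLike.mul_conj]
  exact_mod_cast congrArg ((↑) : ℝ → 𝕜) (norm_marginalAmplitude_sq Ψ i)

lemma marginalAmplitude_ne_zero_iff (Ψ : ι × κ → 𝕜) (i : ι) :
    marginalAmplitude Ψ i ≠ 0 ↔ ∃ k, Ψ (i, k) ≠ 0 := by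
  rw [← norm_ne_zero_iff, ← pow_ne_zero_iff two_ne_zero, norm_marginalAmplitude_sq, ne_eq,
    Finset.sum_eq_zero_iff_of_nonneg fun _ _ => sq_nonneg _]
  simp

variable [Fintype ι]

lemma sum_norm_marginalAmplitude_sq (Ψ : ι × κ → 𝕜) :
    ∑ i, ‖marginalAmplitude Ψ i‖ ^ 2 = ∑ p, ‖Ψ p‖ ^ 2 := by
  simp only [norm_marginalAmplitude_sq, Fintype.sum_prod_type]

lemma sum_mul_marginalAmplitude_mul_conj (f : ι → 𝕜) (Ψ : ι × κ → 𝕜) :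
    ∑ i, f i * (marginalAmplitude Ψ i * conj (marginalAmplitude Ψ i)) =
      ∑ p, f p.1 * (Ψ p * conj (Ψ p)) := by
  simp only [marginalAmplitude_mul_conj, Finset.mul_sum, Fintype.sum_prod_type]

lemma schurPureOutput_marginalAmplitude_mul_eq_zero_iff (A B : Matrix ι ι 𝕜) (Ψ : ι × κ → 𝕜) :
    schurPureOutput A (marginalAmplitude Ψ) * schurPureOutput B (marginalAmplitude Ψ) = 0 ↔
      schurPureOutput (A.submatrix Prod.fst Prod.fst) Ψ *
        schurPureOutput (B.submatrix Prod.fst Prod.fst) Ψ = 0 := by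
  simp only [schurPureOutput_mul_eq_zero_iff, marginalAmplitude_ne_zero_iff,
    sum_mul_marginalAmplitude_mul_conj, Matrix.submatrix_apply, Prod.forall]
  constructor
  · intro h i k j k' hi hj
    exact h i j ⟨k, hi⟩ ⟨k', hj⟩
  · rintro h i j ⟨k, hi⟩ ⟨k', hj⟩
    exact h i k j k' hi hj

theorem stmt_11_general {γ : Type*} (X : γ → Matrix ι ι 𝕜) (Ψ : ι × κ → 𝕜)
    (hΨ : ∑ p, ‖Ψ p‖ ^ 2 = 1)
    (horth : ∀ m n, m ≠ n →
      schurPureOutput ((X m).submatrix Prod.fst Prod.fst) Ψ *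
        schurPureOutput ((X n).submatrix Prod.fst Prod.fst) Ψ = 0) :
    ∃ ψ : ι → 𝕜, ∑ i, ‖ψ i‖ ^ 2 = 1 ∧
      ∀ m n, m ≠ n → schurPureOutput (X m) ψ * schurPureOutput (X n) ψ = 0 :=
  ⟨marginalAmplitude Ψ, (sum_norm_marginalAmplitude_sq Ψ).trans hΨ, fun m n hmn =>
    (schurPureOutput_marginalAmplitude_mul_eq_zero_iff (X m) (X n) Ψ).mpr (horth m n hmn)⟩

end RCLike

theorem stmt_11 (d M : ℕ)
    (X : Fin M → Matrix (Fin d) (Fin d) ℂ)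
    (hXpsd : ∀ n, (X n).PosSemidef)
    (hXdiag : ∀ (n : Fin M) (k : Fin d), X n k k = 1)
    (Ψ : Matrix (Fin d) (Fin d) ℂ)
    (hΨ : ∑ k, ∑ k', ‖Ψ k k'‖ ^ 2 = 1)
    (horth : ∀ m n : Fin M, m ≠ n →
      (Matrix.of fun pq rs : Fin d × Fin d =>
        X m pq.1 rs.1 * Ψ pq.1 pq.2 * conj (Ψ rs.1 rs.2)) *
      (Matrix.of fun pq rs : Fin d × Fin d =>
        X n pq.1 rs.1 * Ψ pq.1 pq.2 * conj (Ψ rs.1 rs.2)) = 0) :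
    ∃ ψ : Fin d → ℂ,
      (∑ k, ‖ψ k‖ ^ 2 = 1) ∧
      (∀ m n : Fin M, m ≠ n →
        (Matrix.of fun k l : Fin d => X m k l * ψ k * conj (ψ l)) *
        (Matrix.of fun k l : Fin d => X n k l * ψ k * conj (ψ l)) = 0) :=
  stmt_11_general X (fun p => Ψ p.1 p.2) ((Fintype.sum_prod_type _).trans hΨ) horth
end

section
/- Let X⁽¹⁾, …, X⁽ᴹ⁾ be d×d correlation matrices and let Ψ be a d×d complex matrix with Frobenius norm 1. For each n define the (d·d)×(d·d) matrix ρ⁽ⁿ⁾, indexed by pairs, with entries ρ⁽ⁿ⁾_{(k,k'),(l,l')} = X⁽ⁿ⁾_{k,l} · Ψ_{k,k'} · conj(Ψ_{l,l'}). If ρ⁽ᵐ⁾ · ρ⁽ⁿ⁾ = 0 for all m ≠ n, then M ≤ d. (The maximal set of perfectly distinguishable Schur-product channels, even with entangled inputs, has size at most d; equivalently, the identity classical action has distinguishability number d.) -/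
open scoped Matrix ComplexConjugate ComplexOrder

/-!
Let `ρ⁽ⁿ⁾` be the output states. Pick an entry `Ψ k k' ≠ 0`. The outputs are Hermitian and
annihilate each other, so their columns at `(k, k')` are pairwise orthogonal; these columns do not
vanish, since the diagonal entry there is `X⁽ⁿ⁾ k k * |Ψ k k'|²`, so they are linearly independent.
That only gives `M ≤ d²`, but the column of `ρ⁽ⁿ⁾` at `(k, k')` depends on `X⁽ⁿ⁾` only through its
`k`-th column, and linearly so. Hence the `k`-th columns of the `X⁽ⁿ⁾` are already linearly
independent, in dimension `d`.
-/

section DistinguishableOutputs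

variable {ι κ τ R : Type*} [CommRing R]

theorem linearIndependent_of_pairwise_dotProduct_eq_zero [Fintype ι] [NoZeroDivisors R]
    {u v : τ → ι → R} (horth : Pairwise fun m n => u m ⬝ᵥ v n = 0)
    (hdiag : ∀ n, u n ⬝ᵥ v n ≠ 0) : LinearIndependent R v := by
  rw [linearIndependent_iff']
  intro s c hc m hm
  have hcoeff : c m * (u m ⬝ᵥ v m) = 0 :=
    calc c m * (u m ⬝ᵥ v m)
        = ∑ n ∈ s, c n * (u m ⬝ᵥ v n) := by
          rw [Finset.sum_eq_single_of_mem m hm]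
          intro n _ hnm
          rw [horth hnm.symm, mul_zero]
      _ = u m ⬝ᵥ ∑ n ∈ s, c n • v n := by
          simp only [dotProduct_sum, dotProduct_smul, smul_eq_mul]
      _ = 0 := by rw [hc, dotProduct_zero]
  exact (mul_eq_zero.mp hcoeff).resolve_right (hdiag m)

variable [StarRing R]

theorem linearIndependent_col_of_isHermitian_of_mul_eq_zero [Fintype ι] [NoZeroDivisors R]
    [PartialOrder R] [StarOrderedRing R] {A : τ → Matrix ι ι R} (hA : ∀ n, (A n).IsHermitian)
    {j : ι} (hcol : ∀ n, (A n).col j ≠ 0) (horth : Pairwise fun m n => A m * A n = 0) :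
    LinearIndependent R fun n => (A n).col j := by
  have hentry (m n : τ) : star ((A m).col j) ⬝ᵥ (A n).col j = (A m * A n) j j := by
    nth_rw 2 [← (hA m).eq]
    rfl
  have horth_col : Pairwise fun m n => star ((A m).col j) ⬝ᵥ (A n).col j = 0 := by
    intro m n hmn
    simp only [hentry, horth hmn, Matrix.zero_apply]
  exact linearIndependent_of_pairwise_dotProduct_eq_zero horth_col
    fun n => dotProduct_star_self_eq_zero.not.mpr (hcol n)

/-- The output of the Schur-product channel `ρ ↦ ρ ∘ X`, acting on the first tensor factor of the
rank-one operator `|Ψ⟩⟨Ψ|`, where the matrix `Ψ` lists the coefficients of a bipartite vector. -/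
def schurOutput (X : Matrix ι ι R) (Ψ : Matrix ι κ R) : Matrix (ι × κ) (ι × κ) R :=
  Matrix.of fun p q => X p.1 q.1 * Ψ p.1 p.2 * conj (Ψ q.1 q.2)

theorem isHermitian_schurOutput {X : Matrix ι ι R} (hX : X.IsHermitian) (Ψ : Matrix ι κ R) :
    (schurOutput X Ψ).IsHermitian := by
  ext p q
  simp only [schurOutput, Matrix.conjTranspose_apply, Matrix.of_apply, star_mul', starRingEnd_apply,
    star_star, hX.apply]
  ring

theorem col_schurOutput (X : Matrix ι ι R) (Ψ : Matrix ι κ R) (q : ι × κ) :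
    (schurOutput X Ψ).col q =
      (LinearMap.mulRight R (fun p : ι × κ => Ψ p.1 p.2 * conj (Ψ q.1 q.2)) ∘ₗ
        LinearMap.funLeft R R Prod.fst) (X.col q.1) := by
  ext p
  exact mul_assoc _ _ _

variable [Fintype ι] [Fintype κ] [PartialOrder R] [StarOrderedRing R]

theorem linearIndependent_col_of_schurOutput_mul_eq_zero [NoZeroDivisors R]
    {X : τ → Matrix ι ι R} (hX : ∀ n, (X n).IsHermitian) {Ψ : Matrix ι κ R} {k : ι} {k' : κ}
    (hΨ : Ψ k k' ≠ 0) (hdiag : ∀ n, X n k k ≠ 0)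
    (horth : Pairwise fun m n => schurOutput (X m) Ψ * schurOutput (X n) Ψ = 0) :
    LinearIndependent R fun n => (X n).col k := by
  have hcol (n : τ) : (schurOutput (X n) Ψ).col (k, k') ≠ 0 := fun hzero =>
    mul_ne_zero (mul_ne_zero (hdiag n) hΨ) (star_ne_zero.mpr hΨ) (congrFun hzero (k, k'))
  have hcols : LinearIndependent R fun n => (schurOutput (X n) Ψ).col (k, k') :=
    linearIndependent_col_of_isHermitian_of_mul_eq_zero
      (fun n => isHermitian_schurOutput (hX n) Ψ) hcol horth
  simp only [col_schurOutput] at hcols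
  exact LinearIndependent.of_comp _ hcols

theorem stmt_12_general [Fintype τ] [IsDomain R] {X : τ → Matrix ι ι R}
    (hX : ∀ n, (X n).IsHermitian) (hdiag : ∀ n k, X n k k ≠ 0) {Ψ : Matrix ι κ R} (hΨ : Ψ ≠ 0)
    (horth : Pairwise fun m n => schurOutput (X m) Ψ * schurOutput (X n) Ψ = 0) :
    Fintype.card τ ≤ Fintype.card ι := by
  obtain ⟨k, k', hk⟩ : ∃ k k', Ψ k k' ≠ 0 := by
    by_contra! hzero
    exact hΨ (Matrix.ext hzero)
  have hindep : LinearIndependent R fun n => (X n).col k :=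
    linearIndependent_col_of_schurOutput_mul_eq_zero hX hk (hdiag · k) horth
  simpa only [Module.finrank_fintype_fun_eq_card] using hindep.fintype_card_le_finrank

end DistinguishableOutputs

theorem stmt_12 (d M : ℕ)
    (X : Fin M → Matrix (Fin d) (Fin d) ℂ)
    (hXpsd : ∀ n, (X n).PosSemidef)
    (hXdiag : ∀ (n : Fin M) (k : Fin d), X n k k = 1)
    (Ψ : Matrix (Fin d) (Fin d) ℂ)
    (hΨ : ∑ k, ∑ k', ‖Ψ k k'‖ ^ 2 = 1)
    (horth : ∀ m n : Fin M, m ≠ n →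
      (Matrix.of fun pq rs : Fin d × Fin d =>
        X m pq.1 rs.1 * Ψ pq.1 pq.2 * conj (Ψ rs.1 rs.2)) *
      (Matrix.of fun pq rs : Fin d × Fin d =>
        X n pq.1 rs.1 * Ψ pq.1 pq.2 * conj (Ψ rs.1 rs.2)) = 0) :
    M ≤ d := by
  have hΨ_ne : Ψ ≠ 0 := by rintro rfl; simp at hΨ
  simpa only [Fintype.card_fin] using
    stmt_12_general (fun n => (hXpsd n).isHermitian) (by simp [hXdiag]) hΨ_ne horth
end

section
/- Let λ be a probability vector of dimension d and let T be the circulant bistochastic matrix with entries T_{k,l} = λ_{(k−l) mod d}. Then there exist d positive semidefinite complex matrices J⁽¹⁾, …, J⁽ᵈ⁾ of size d², indexed by Fin d × Fin d, such that for every n: (J⁽ⁿ⁾)_{(k,l),(k,l)} = T_{k,l}/d for all k, l, and ∑ₖ (J⁽ⁿ⁾)_{(k,i),(k,j)} = δᵢⱼ/d for all i, j; and which are pairwise orthogonal: J⁽ᵐ⁾ · J⁽ⁿ⁾ = 0 for all m ≠ n. (Every circulant classical action T admits d perfectly distinguishable quantum channels.) -/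
open scoped Matrix ComplexConjugate ComplexOrder

/-!
A circulant `T` is `λ` read along the Latin square `L k l = k - l`. Given unimodular phases `u`,
put `ψ_a = (1/√d) ∑ u k |k, l⟩`, summed over the cells `(k, l)` of `L` carrying the symbol `a`.
For different symbols these vectors have disjoint supports, and for the same symbol and two phase
vectors `u`, `v` their inner product is `⟨u, v⟩ / d`, because each symbol occurs once in every row.
Hence `∑ a, λ a |ψ_a⟩⟨ψ_a|` has classical action `T` whatever the phases are, and orthogonal phase
vectors give orthogonal states. The rows of the Fourier matrix are `d` pairwise orthogonal
unimodular vectors.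
-/

section JamiolkowskiState

variable {κ ι α : Type*} [DecidableEq α] (L : κ → ι → α)

/-- The incidence matrix between the cells of the array `L` and its symbols, with row `k` of the
array weighted by the phase `u k`. Column `a` is `√d · ψ_a`, left unnormalized so that the square
root of `d` never appears. -/
def phasedIncidence (u : κ → ℂ) : Matrix (κ × ι) α ℂ :=
  .of fun p a => if L p.1 p.2 = a then u p.1 else 0

/-- The matrix `∑ a, lam a |ψ_a⟩⟨ψ_a|`, the Jamiołkowski state of the channel attached to the
weights `lam` and phases `u`; the division by the number of rows normalizes the vectors `ψ_a`. -/
noncomputable def jamiolkowskiState [Fintype κ] [Fintype α] (lam : α → ℝ) (u : κ → ℂ) :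
    Matrix (κ × ι) (κ × ι) ℂ :=
  phasedIncidence L u * Matrix.diagonal (fun a => (lam a : ℂ) / Fintype.card κ) *
    (phasedIncidence L u)ᴴ

variable {L}

theorem conjTranspose_phasedIncidence_mul [Fintype κ] [Fintype ι]
    (hL : ∀ k, (L k).Bijective) (u v : κ → ℂ) :
    (phasedIncidence L u)ᴴ * phasedIncidence L v = (star u ⬝ᵥ v) • (1 : Matrix α α ℂ) := by
  ext a b
  have sum_row (k : κ) :
      ∑ l, star (if L k l = a then u k else 0) * (if L k l = b then v k else 0) =
        if a = b then star (u k) * v k else 0 := by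
    obtain ⟨l, rfl⟩ := (hL k).surjective a
    rw [Fintype.sum_eq_single l fun _ hne => by simp [(hL k).injective.ne hne]]
    simp
  simp only [Matrix.mul_apply, Fintype.sum_prod_type, Matrix.conjTranspose_apply, phasedIncidence,
    Matrix.of_apply, sum_row]
  by_cases hab : a = b <;> simp [hab, dotProduct]

variable [Fintype κ] [Fintype α] {lam : α → ℝ} {u v : κ → ℂ}

theorem posSemidef_jamiolkowskiState [Finite ι] (hlam : ∀ a, 0 ≤ lam a) :
    (jamiolkowskiState L lam u).PosSemidef := by
  refine Matrix.PosSemidef.mul_mul_conjTranspose_same (Matrix.PosSemidef.diagonal fun a => ?_) _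
  exact div_nonneg (Complex.zero_le_real.mpr (hlam a)) (Nat.cast_nonneg _)

theorem jamiolkowskiState_apply (p q : κ × ι) :
    jamiolkowskiState L lam u p q =
      if L p.1 p.2 = L q.1 q.2 then
        u p.1 * (lam (L p.1 p.2) / Fintype.card κ) * star (u q.1) else 0 := by
  rw [jamiolkowskiState, Matrix.mul_apply]
  by_cases h : L p.1 p.2 = L q.1 q.2 <;>
    simp [phasedIncidence, Matrix.mul_diagonal, apply_ite conj, h]

theorem jamiolkowskiState_apply_same_row [DecidableEq ι] {k : κ} (hL : (L k).Injective)
    (hu : ‖u k‖ = 1) (i j : ι) :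
    jamiolkowskiState L lam u (k, i) (k, j) =
      if i = j then (lam (L k i) : ℂ) / Fintype.card κ else 0 := by
  have phase_cancel : u k * star (u k) = 1 := by simp [Complex.mul_conj', hu]
  simp only [jamiolkowskiState_apply, hL.eq_iff]
  rw [mul_right_comm, phase_cancel, one_mul]

theorem sum_jamiolkowskiState_apply [DecidableEq ι] (hrow : ∀ k, (L k).Injective)
    (hcol : ∀ l, (fun k => L k l).Bijective) (hlam : ∑ a, lam a = 1) (hu : ∀ k, ‖u k‖ = 1)
    (i j : ι) :
    ∑ k, jamiolkowskiState L lam u (k, i) (k, j) =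
      (if i = j then 1 else 0) / Fintype.card κ := by
  have sum_col : ∑ k, (lam (L k i) : ℂ) = 1 := by
    rw [(hcol i).sum_comp fun a => (lam a : ℂ)]
    exact_mod_cast hlam
  simp only [jamiolkowskiState_apply_same_row (hrow _) (hu _)]
  split_ifs
  · rw [← Finset.sum_div, sum_col]
  · simp

theorem jamiolkowskiState_mul_eq_zero [Fintype ι] (hL : ∀ k, (L k).Bijective)
    (huv : star u ⬝ᵥ v = 0) :
    jamiolkowskiState L lam u * jamiolkowskiState L lam v = 0 := by
  have cross : (phasedIncidence L u)ᴴ * phasedIncidence L v = 0 := by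
    rw [conjTranspose_phasedIncidence_mul hL, huv, zero_smul]
  simp only [jamiolkowskiState, Matrix.mul_assoc]
  simp only [← Matrix.mul_assoc (phasedIncidence L u)ᴴ, cross, Matrix.zero_mul, Matrix.mul_zero]

end JamiolkowskiState

theorem star_stdAddChar_mul_dotProduct_eq_zero {d : ℕ} [NeZero d] {m n : ZMod d} (hmn : m ≠ n) :
    star (fun k => ZMod.stdAddChar (k * m)) ⬝ᵥ (fun k => ZMod.stdAddChar (k * n)) = 0 := by
  calc star (fun k => ZMod.stdAddChar (k * m)) ⬝ᵥ (fun k => ZMod.stdAddChar (k * n))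
      = ∑ k, ZMod.stdAddChar (k * (n - m)) := Finset.sum_congr rfl fun k _ => by
        rw [Pi.star_apply, Complex.star_def, ← AddChar.map_neg_eq_conj, ← AddChar.map_add_eq_mul]
        ring_nf
    _ = 0 := by
        simp [AddChar.sum_mulShift _ (ZMod.isPrimitive_stdAddChar d), sub_eq_zero, hmn.symm]

theorem exists_unimodular_pairwise_orthogonal (ι : Type*) [Fintype ι] :
    ∃ u : ι → ι → ℂ, (∀ n k, ‖u n k‖ = 1) ∧ Pairwise fun m n => star (u m) ⬝ᵥ u n = 0 := by
  cases isEmpty_or_nonempty ι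
  · exact ⟨isEmptyElim, isEmptyElim, isEmptyElim⟩
  let e : ι ≃ ZMod (Fintype.card ι) := Fintype.equivOfCardEq (ZMod.card _).symm
  refine ⟨fun n k => ZMod.stdAddChar (e k * e n), fun n k => AddChar.norm_apply _ _, ?_⟩
  intro m n hmn
  rw [← star_stdAddChar_mul_dotProduct_eq_zero (e.injective.ne hmn)]
  exact e.sum_comp fun x => star (ZMod.stdAddChar (x * e m)) * ZMod.stdAddChar (x * e n)

theorem stmt_15_general {ι : Type*} [Fintype ι] [DecidableEq ι]
    (lam : ι → ℝ) (hlam0 : ∀ a, 0 ≤ lam a) (hlam1 : ∑ a, lam a = 1)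
    (L : ι → ι → ι) (hrow : ∀ k, (L k).Bijective) (hcol : ∀ l, (fun k => L k l).Bijective)
    (T : Matrix ι ι ℝ) (hT : ∀ k l, T k l = lam (L k l)) :
    ∃ J : ι → Matrix (ι × ι) (ι × ι) ℂ,
      (∀ n, (J n).PosSemidef) ∧
      (∀ n k l, J n (k, l) (k, l) = (T k l : ℂ) / Fintype.card ι) ∧
      (∀ n i j, ∑ k, J n (k, i) (k, j) = (if i = j then 1 else 0) / Fintype.card ι) ∧
      (∀ m n, m ≠ n → J m * J n = 0) := by
  obtain ⟨u, hu, horth⟩ := exists_unimodular_pairwise_orthogonal ι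
  refine ⟨fun n => jamiolkowskiState L lam (u n), fun n => posSemidef_jamiolkowskiState hlam0,
    fun n k l => ?_,
    fun n => sum_jamiolkowskiState_apply (fun k => (hrow k).injective) hcol hlam1 (hu n),
    fun m n hmn => jamiolkowskiState_mul_eq_zero hrow (horth hmn)⟩
  simp only [jamiolkowskiState_apply_same_row (hrow k).injective (hu n k), if_true, hT]

theorem stmt_15 (d : ℕ) (hd : 0 < d)
    (lam : Fin d → ℝ) (hlam0 : ∀ k, 0 ≤ lam k) (hlam1 : ∑ k, lam k = 1)
    (T : Matrix (Fin d) (Fin d) ℝ) (hT : ∀ k l : Fin d, T k l = lam (k - l)) :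
    ∃ J : Fin d → Matrix (Fin d × Fin d) (Fin d × Fin d) ℂ,
      (∀ n, (J n).PosSemidef) ∧
      (∀ (n : Fin d) (k l : Fin d), J n (k, l) (k, l) = (T k l : ℂ) / d) ∧
      (∀ (n : Fin d) (i j : Fin d),
        ∑ k, J n (k, i) (k, j) = (if i = j then 1 else 0) / d) ∧
      (∀ m n : Fin d, m ≠ n → J m * J n = 0) := by
  have : NeZero d := ⟨hd.ne'⟩
  simpa only [Fintype.card_fin] using stmt_15_general lam hlam0 hlam1 (fun k l => k - l)
    (fun k => (Equiv.subLeft k).bijective) (fun l => (Equiv.subRight l).bijective) T hT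
end

section
/- Let U and V be 2×2 unitary matrices and let ρ be a 2×2 positive semidefinite complex matrix with trace 1. If Tr(V† U ρ) = 0, then Tr(V† U) = 0. (Two qubit unitary channels that are perfectly distinguishable with the help of any entangled input state are necessarily Hilbert–Schmidt orthogonal, and hence are perfectly distinguishable already with the maximally entangled input.) -/
open scoped Matrix ComplexConjugate ComplexOrder

/-!
By the Cayley–Hamilton theorem a unitary `W` of size two satisfies `W + (det W) Wᴴ = (tr W) 1`.
Tracing this against a Hermitian `ρ` gives `tr (W ρ) + det W * star (tr (W ρ)) = tr W * tr ρ`,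
and `W = Vᴴ U` is the case of interest.
-/

theorem trace_conjTranspose_mul_of_isHermitian {n R : Type*} [Fintype n]
    [NonUnitalCommSemiring R] [StarRing R] {ρ : Matrix n n R} (hρ : ρ.IsHermitian)
    (A : Matrix n n R) : (Aᴴ * ρ).trace = star (A * ρ).trace := by
  rw [← Matrix.trace_conjTranspose, Matrix.conjTranspose_mul, hρ.eq, Matrix.trace_mul_comm]

section

variable {n R : Type*} [Fintype n] [DecidableEq n] [CommRing R]

theorem sq_add_det_smul_one_of_card_eq_two (hn : Fintype.card n = 2) (A : Matrix n n R) :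
    A ^ 2 + A.det • (1 : Matrix n n R) = A.trace • A := by
  nontriviality R
  have hCH := A.aeval_self_charpoly
  simp only [A.charpoly_of_card_eq_two hn, map_add, map_sub, map_mul, map_pow,
    Polynomial.aeval_X, Polynomial.aeval_C, Algebra.algebraMap_eq_smul_one, smul_mul_assoc,
    one_mul] at hCH
  rwa [sub_add_eq_add_sub, sub_eq_zero] at hCH

variable [StarRing R]

theorem add_det_smul_conjTranspose_of_mem_unitaryGroup (hn : Fintype.card n = 2)
    {W : Matrix n n R} (hW : W ∈ Matrix.unitaryGroup n R) :
    W + W.det • Wᴴ = W.trace • (1 : Matrix n n R) := by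
  have hWW : W * Wᴴ = 1 := Matrix.mem_unitaryGroup_iff.mp hW
  calc W + W.det • Wᴴ = (W ^ 2 + W.det • (1 : Matrix n n R)) * Wᴴ := by
        rw [add_mul, sq, mul_assoc, hWW, mul_one, smul_mul_assoc, one_mul]
    _ = W.trace • (1 : Matrix n n R) := by
        rw [sq_add_det_smul_one_of_card_eq_two hn, smul_mul_assoc, hWW]

theorem trace_mul_add_det_mul_star_trace_mul (hn : Fintype.card n = 2) {W ρ : Matrix n n R}
    (hW : W ∈ Matrix.unitaryGroup n R) (hρ : ρ.IsHermitian) :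
    (W * ρ).trace + W.det * star (W * ρ).trace = W.trace * ρ.trace := by
  calc (W * ρ).trace + W.det * star (W * ρ).trace = ((W + W.det • Wᴴ) * ρ).trace := by
        rw [add_mul, smul_mul_assoc, Matrix.trace_add, Matrix.trace_smul, smul_eq_mul,
          trace_conjTranspose_mul_of_isHermitian hρ]
    _ = W.trace * ρ.trace := by
        rw [add_det_smul_conjTranspose_of_mem_unitaryGroup hn hW, smul_mul_assoc, one_mul,
          Matrix.trace_smul, smul_eq_mul]

theorem stmt_16_general (hn : Fintype.card n = 2) {U V ρ : Matrix n n R}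
    (hU : U ∈ Matrix.unitaryGroup n R) (hV : V ∈ Matrix.unitaryGroup n R)
    (hρ : ρ.IsHermitian) (h : (Vᴴ * U * ρ).trace = 0) :
    (Vᴴ * U).trace * ρ.trace = 0 := by
  have hW : Vᴴ * U ∈ Matrix.unitaryGroup n R := mul_mem (Unitary.star_mem hV) hU
  rw [← trace_mul_add_det_mul_star_trace_mul hn hW hρ, h, star_zero, mul_zero, add_zero]

end

theorem stmt_16 (U V ρ : Matrix (Fin 2) (Fin 2) ℂ)
    (hU : U ∈ Matrix.unitaryGroup (Fin 2) ℂ)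
    (hV : V ∈ Matrix.unitaryGroup (Fin 2) ℂ)
    (hρ : ρ.PosSemidef) (htr : ρ.trace = 1)
    (h : (Vᴴ * U * ρ).trace = 0) :
    (Vᴴ * U).trace = 0 := by
  simpa only [htr, mul_one] using
    stmt_16_general (Fintype.card_fin 2) hU hV hρ.isHermitian h
end

section
/- Let a ∈ [0,1]. There exist three 2×2 unitary matrices U₁, U₂, U₃ with |(Uₙ)₁₁|² = |(Uₙ)₂₂|² = a and |(Uₙ)₁₂|² = |(Uₙ)₂₁|² = 1 − a for each n, which are pairwise Hilbert–Schmidt orthogonal (Tr(Uₘ† Uₙ) = 0 for m ≠ n), if and only if 1/3 ≤ a ≤ 2/3. -/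
open scoped Matrix

/-!
Necessity is Bessel's inequality for the vectorizations of the unitaries divided by `√2`: a basis
vector of `ℂ⁴` has squared overlap `a / 2`, or `(1 - a) / 2`, with each of three orthonormal
vectors, so `3 * a ≤ 2` and `3 * (1 - a) ≤ 2`.

For sufficiency, the matrices `!![x, y; -conj y, conj x]` form a copy of the quaternions in which
half the Hilbert–Schmidt inner product is the real inner product of `(x, y) ∈ ℂ² = ℝ⁴`. The map
`r ↦ (r₀ + √t * r₁ * I, r₂ + √(1 - t) * r₁ * I)` embeds `ℝ³` isometrically in `ℂ²`, so the rows of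
a real orthogonal `3 × 3` matrix with columns `u`, `v`, `w` give three orthogonal unitaries, and all
have classical action `a` as soon as `uₙ² + t * vₙ² = a` for every `n`. Taking
`v = (0, 1, -1) / √2` forces `t = 3 * a - 1`, and `t ∈ [0, 1]` is the condition on `a`.
-/

open scoped ComplexConjugate

section Bessel

variable {𝕜 ι κ m n : Type*} [RCLike 𝕜] [Fintype κ] [Fintype m] [Fintype n]

theorem sum_norm_sq_apply_le_one_of_orthonormal [Fintype ι] {v : ι → EuclideanSpace 𝕜 κ}
    (hv : Orthonormal 𝕜 v) (p : κ) : ∑ k, ‖v k p‖ ^ 2 ≤ 1 := by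
  classical
  simpa [EuclideanSpace.inner_single_right] using
    hv.sum_inner_products_le (EuclideanSpace.single p (1 : 𝕜)) (s := Finset.univ)

/-- The vectorization `|A⟩⟩` of a matrix as a vector of a Hilbert space, whose inner product is the
Hilbert–Schmidt one. As for `Matrix.vec`, the column index comes first. -/
def hilbertSchmidtVec (A : Matrix m n 𝕜) : EuclideanSpace 𝕜 (n × m) :=
  WithLp.toLp 2 A.vec

theorem inner_hilbertSchmidtVec (A B : Matrix m n 𝕜) :
    inner 𝕜 (hilbertSchmidtVec A) (hilbertSchmidtVec B) = (Aᴴ * B).trace := by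
  rw [hilbertSchmidtVec, hilbertSchmidtVec, EuclideanSpace.inner_toLp_toLp, dotProduct_comm,
    Matrix.star_vec_dotProduct_vec]

theorem orthonormal_smul_hilbertSchmidtVec {A : ι → Matrix m n 𝕜} {r : ℝ} (hr : 0 < r)
    (hnorm : ∀ k, ((A k)ᴴ * A k).trace = r)
    (horth : Pairwise fun k l ↦ ((A k)ᴴ * A l).trace = 0) :
    Orthonormal 𝕜 fun k ↦ ((√r)⁻¹ : 𝕜) • hilbertSchmidtVec (A k) := by
  classical
  have hsqrt : (√r : 𝕜) * √r = r := mod_cast Real.mul_self_sqrt hr.le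
  have hne : (√r : 𝕜) ≠ 0 := mod_cast (Real.sqrt_pos.2 hr).ne'
  rw [orthonormal_iff_ite]
  intro k l
  rw [inner_smul_left, inner_smul_right, inner_hilbertSchmidtVec, map_inv₀, RCLike.conj_ofReal]
  split_ifs with hkl
  · rw [← hkl, hnorm, ← hsqrt]
    field_simp
  · rw [horth hkl, mul_zero, mul_zero]

theorem sum_norm_sq_entry_le_of_orthogonal [Fintype ι] {A : ι → Matrix m n 𝕜} {r : ℝ} (hr : 0 < r)
    (hnorm : ∀ k, ((A k)ᴴ * A k).trace = r)
    (horth : Pairwise fun k l ↦ ((A k)ᴴ * A l).trace = 0) (i : m) (j : n) :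
    ∑ k, ‖A k i j‖ ^ 2 ≤ r := by
  have hbessel := sum_norm_sq_apply_le_one_of_orthonormal
    (orthonormal_smul_hilbertSchmidtVec hr hnorm horth) (j, i)
  simp only [hilbertSchmidtVec, PiLp.smul_apply, Matrix.vec, smul_eq_mul, norm_mul, norm_inv,
    RCLike.norm_ofReal, abs_of_nonneg (Real.sqrt_nonneg r), mul_pow, inv_pow, Real.sq_sqrt hr.le,
    ← Finset.mul_sum] at hbessel
  rwa [inv_mul_le_one₀ hr] at hbessel

theorem sum_norm_sq_entry_le_card_of_unitary [Fintype ι] [DecidableEq n]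
    {U : ι → Matrix n n 𝕜} (hU : ∀ k, U k ∈ Matrix.unitaryGroup n 𝕜)
    (horth : Pairwise fun k l ↦ ((U k)ᴴ * U l).trace = 0) (i j : n) :
    ∑ k, ‖U k i j‖ ^ 2 ≤ Fintype.card n := by
  have : Nonempty n := ⟨i⟩
  refine sum_norm_sq_entry_le_of_orthogonal (mod_cast Fintype.card_pos) (fun k ↦ ?_) horth i j
  rw [← Matrix.star_eq_conjTranspose, Matrix.mem_unitaryGroup_iff'.1 (hU k), Matrix.trace_one,
    RCLike.ofReal_natCast]

end Bessel

theorem dotProduct_row_of_mem_orthogonalGroup {n R : Type*} [Fintype n] [DecidableEq n] [CommRing R]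
    {M : Matrix n n R} (hM : M ∈ Matrix.orthogonalGroup n R) (i j : n) :
    M i ⬝ᵥ M j = (1 : Matrix n n R) i j :=
  congrFun₂ ((Matrix.mem_orthogonalGroup_iff n R).1 hM) i j

section Quaternion

/-- The complex matrix of the quaternion `x + y j`; it lies in `SU(2)` when `|x|² + |y|² = 1`. -/
def quaternionMatrix (x y : ℂ) : Matrix (Fin 2) (Fin 2) ℂ :=
  !![x, y; -conj y, conj x]

theorem quaternionMatrix_mem_unitaryGroup {x y : ℂ} (h : ‖x‖ ^ 2 + ‖y‖ ^ 2 = 1) :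
    quaternionMatrix x y ∈ Matrix.unitaryGroup (Fin 2) ℂ := by
  have hxy : x * conj x + y * conj y = 1 := by
    rw [Complex.mul_conj', Complex.mul_conj']
    exact_mod_cast h
  rw [Matrix.mem_unitaryGroup_iff, Matrix.one_fin_two]
  ext i j
  fin_cases i <;> fin_cases j <;> simp [quaternionMatrix, Matrix.mul_apply]
  · linear_combination hxy
  · ring
  · ring
  · linear_combination hxy

theorem trace_conjTranspose_mul_quaternionMatrix (x y z w : ℂ) :
    ((quaternionMatrix x y)ᴴ * quaternionMatrix z w).trace =
      (2 * (x.re * z.re + x.im * z.im + y.re * w.re + y.im * w.im) : ℝ) := by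
  apply Complex.ext <;>
    simp [quaternionMatrix, Matrix.trace_fin_two, Matrix.mul_apply] <;> ring

end Quaternion

section Split

/-- The quaternion matrix of the image of `r` under the isometric embedding of `ℝ³` in `ℂ²` that
shares the squared middle coordinate between the imaginary parts in the ratio `t : 1 - t`. -/
noncomputable def splitMatrix (t : ℝ) (r : Fin 3 → ℝ) : Matrix (Fin 2) (Fin 2) ℂ :=
  quaternionMatrix ⟨r 0, √t * r 1⟩ ⟨r 2, √(1 - t) * r 1⟩

variable {t : ℝ}

theorem trace_conjTranspose_mul_splitMatrix (ht0 : 0 ≤ t) (ht1 : t ≤ 1) (r s : Fin 3 → ℝ) :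
    ((splitMatrix t r)ᴴ * splitMatrix t s).trace = (2 * (r ⬝ᵥ s) : ℝ) := by
  have hsqrt : √t ^ 2 = t := Real.sq_sqrt ht0
  have hsqrt' : √(1 - t) ^ 2 = 1 - t := Real.sq_sqrt (sub_nonneg.2 ht1)
  rw [splitMatrix, splitMatrix, trace_conjTranspose_mul_quaternionMatrix, Matrix.vec3_dotProduct]
  congr 2
  linear_combination r 1 * s 1 * (hsqrt + hsqrt')

theorem norm_sq_splitMatrix_apply_self (ht0 : 0 ≤ t) (r : Fin 3 → ℝ) (i : Fin 2) :
    ‖splitMatrix t r i i‖ ^ 2 = r 0 ^ 2 + t * r 1 ^ 2 := by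
  have hentry : ‖splitMatrix t r i i‖ = ‖(⟨r 0, √t * r 1⟩ : ℂ)‖ := by
    fin_cases i <;> simp [splitMatrix, quaternionMatrix]
  rw [hentry, Complex.sq_norm, Complex.normSq_mk]
  linear_combination r 1 ^ 2 * Real.sq_sqrt ht0

theorem norm_sq_splitMatrix_apply_of_ne (ht1 : t ≤ 1) (r : Fin 3 → ℝ) {i j : Fin 2} (hij : i ≠ j) :
    ‖splitMatrix t r i j‖ ^ 2 = r 2 ^ 2 + (1 - t) * r 1 ^ 2 := by
  have hentry : ‖splitMatrix t r i j‖ = ‖(⟨r 2, √(1 - t) * r 1⟩ : ℂ)‖ := by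
    fin_cases i <;> fin_cases j <;> simp [splitMatrix, quaternionMatrix] at hij ⊢
  rw [hentry, Complex.sq_norm, Complex.normSq_mk]
  linear_combination r 1 ^ 2 * Real.sq_sqrt (sub_nonneg.2 ht1)

theorem splitMatrix_mem_unitaryGroup (ht0 : 0 ≤ t) (ht1 : t ≤ 1) {r : Fin 3 → ℝ}
    (hr : r ⬝ᵥ r = 1) : splitMatrix t r ∈ Matrix.unitaryGroup (Fin 2) ℂ := by
  apply quaternionMatrix_mem_unitaryGroup
  rw [Matrix.vec3_dotProduct] at hr
  rw [Complex.sq_norm, Complex.normSq_mk, Complex.sq_norm, Complex.normSq_mk]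
  linear_combination hr + r 1 ^ 2 * (Real.sq_sqrt ht0 + Real.sq_sqrt (sub_nonneg.2 ht1))

theorem splitMatrix_row_mem_unitaryGroup (ht0 : 0 ≤ t) (ht1 : t ≤ 1)
    {R : Matrix (Fin 3) (Fin 3) ℝ} (hR : R ∈ Matrix.orthogonalGroup (Fin 3) ℝ) (n : Fin 3) :
    splitMatrix t (R n) ∈ Matrix.unitaryGroup (Fin 2) ℂ :=
  splitMatrix_mem_unitaryGroup ht0 ht1 <| by
    rw [dotProduct_row_of_mem_orthogonalGroup hR, Matrix.one_apply_eq]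

theorem pairwise_trace_splitMatrix_row_eq_zero (ht0 : 0 ≤ t) (ht1 : t ≤ 1)
    {R : Matrix (Fin 3) (Fin 3) ℝ} (hR : R ∈ Matrix.orthogonalGroup (Fin 3) ℝ) :
    Pairwise fun m n ↦ ((splitMatrix t (R m))ᴴ * splitMatrix t (R n)).trace = 0 := by
  intro m n hmn
  rw [trace_conjTranspose_mul_splitMatrix ht0 ht1, dotProduct_row_of_mem_orthogonalGroup hR,
    Matrix.one_apply_ne hmn, mul_zero, Complex.ofReal_zero]

end Split

section Frame

/-- For `c ^ 2 + s ^ 2 = 1`, the orthogonal matrix with middle column `(0, 1, -1) / √2` whose outer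
columns are obtained from `(1, 0, 0)` and `-(0, 1, 1) / √2` by a plane rotation. -/
noncomputable def frameMatrix (c s : ℝ) : Matrix (Fin 3) (Fin 3) ℝ :=
  !![c, 0, s;
    √(1 / 2) * s, √(1 / 2), -(√(1 / 2) * c);
    √(1 / 2) * s, -√(1 / 2), -(√(1 / 2) * c)]

variable {c s : ℝ}

theorem frameMatrix_mem_orthogonalGroup (h : c ^ 2 + s ^ 2 = 1) :
    frameMatrix c s ∈ Matrix.orthogonalGroup (Fin 3) ℝ := by
  rw [Matrix.mem_orthogonalGroup_iff]
  ext m n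
  fin_cases m <;> fin_cases n <;>
    simp [frameMatrix, Matrix.mul_apply, Fin.sum_univ_three, -one_div] <;>
    grind [Real.sq_sqrt]

theorem frameMatrix_sq_apply_zero_add (h : c ^ 2 + s ^ 2 = 1) (n : Fin 3) :
    frameMatrix c s n 0 ^ 2 + (3 * c ^ 2 - 1) * frameMatrix c s n 1 ^ 2 = c ^ 2 := by
  fin_cases n <;> simp [frameMatrix, -one_div] <;> grind [Real.sq_sqrt]

theorem frameMatrix_sq_apply_two_add (h : c ^ 2 + s ^ 2 = 1) (n : Fin 3) :
    frameMatrix c s n 2 ^ 2 + (3 * s ^ 2 - 1) * frameMatrix c s n 1 ^ 2 = s ^ 2 := by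
  fin_cases n <;> simp [frameMatrix, -one_div] <;> grind [Real.sq_sqrt]

theorem norm_sq_splitMatrix_frameMatrix_apply_self (h : c ^ 2 + s ^ 2 = 1)
    (hc : 0 ≤ 3 * c ^ 2 - 1) (n : Fin 3) (i : Fin 2) :
    ‖splitMatrix (3 * c ^ 2 - 1) (frameMatrix c s n) i i‖ ^ 2 = c ^ 2 := by
  rw [norm_sq_splitMatrix_apply_self hc, frameMatrix_sq_apply_zero_add h]

theorem norm_sq_splitMatrix_frameMatrix_apply_of_ne (h : c ^ 2 + s ^ 2 = 1)
    (hc : 3 * c ^ 2 - 1 ≤ 1) (n : Fin 3) {i j : Fin 2} (hij : i ≠ j) :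
    ‖splitMatrix (3 * c ^ 2 - 1) (frameMatrix c s n) i j‖ ^ 2 = s ^ 2 := by
  have ht : 1 - (3 * c ^ 2 - 1) = 3 * s ^ 2 - 1 := by linear_combination -3 * h
  rw [norm_sq_splitMatrix_apply_of_ne hc _ hij, ht, frameMatrix_sq_apply_two_add h]

end Frame

theorem stmt_17 (a : ℝ) (ha0 : 0 ≤ a) (ha1 : a ≤ 1) :
    (∃ U : Fin 3 → Matrix (Fin 2) (Fin 2) ℂ,
      (∀ n, U n ∈ Matrix.unitaryGroup (Fin 2) ℂ) ∧
      (∀ n, ‖U n 0 0‖ ^ 2 = a ∧ ‖U n 1 1‖ ^ 2 = a ∧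
            ‖U n 0 1‖ ^ 2 = 1 - a ∧ ‖U n 1 0‖ ^ 2 = 1 - a) ∧
      (∀ m n : Fin 3, m ≠ n → ((U m)ᴴ * U n).trace = 0)) ↔
    (1 / 3 ≤ a ∧ a ≤ 2 / 3) := by
  constructor
  · rintro ⟨U, hU, haction, horth⟩
    have hbound := sum_norm_sq_entry_le_card_of_unitary hU horth
    have hdiag : 3 * a ≤ 2 := by simpa [haction] using hbound 0 0
    have hoff : 3 * (1 - a) ≤ 2 := by simpa [haction, mul_sub] using hbound 0 1
    constructor <;> linarith
  · rintro ⟨hlow, hhigh⟩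
    obtain ⟨c, rfl⟩ : ∃ c, a = c ^ 2 := ⟨√a, (Real.sq_sqrt ha0).symm⟩
    obtain ⟨s, hs⟩ : ∃ s, 1 - c ^ 2 = s ^ 2 := ⟨√(1 - c ^ 2), (Real.sq_sqrt (by linarith)).symm⟩
    have hcs : c ^ 2 + s ^ 2 = 1 := by linarith
    have ht0 : 0 ≤ 3 * c ^ 2 - 1 := by linarith
    have ht1 : 3 * c ^ 2 - 1 ≤ 1 := by linarith
    have hframe := frameMatrix_mem_orthogonalGroup hcs
    have hdiag := norm_sq_splitMatrix_frameMatrix_apply_self hcs ht0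
    have hoff := norm_sq_splitMatrix_frameMatrix_apply_of_ne hcs ht1
    rw [hs]
    exact ⟨fun n ↦ splitMatrix (3 * c ^ 2 - 1) (frameMatrix c s n),
      splitMatrix_row_mem_unitaryGroup ht0 ht1 hframe,
      fun n ↦ ⟨hdiag n 0, hdiag n 1, hoff n zero_ne_one, hoff n one_ne_zero⟩,
      pairwise_trace_splitMatrix_row_eq_zero ht0 ht1 hframe⟩
end

section
/- Let a ∈ [0,1]. There exist four 2×2 unitary matrices U₁, U₂, U₃, U₄ with |(Uₙ)₁₁|² = |(Uₙ)₂₂|² = a and |(Uₙ)₁₂|² = |(Uₙ)₂₁|² = 1 − a for each n, which are pairwise Hilbert–Schmidt orthogonal (Tr(Uₘ† Uₙ) = 0 for m ≠ n), if and only if a = 1/2. (The van der Waerden qubit classical action is the unique bistochastic qubit action with distinguishability number 4.) -/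
open scoped Matrix

/-!
By Bessel's inequality for the vectorizations of `N` pairwise Hilbert–Schmidt orthogonal `d × d`
unitaries, each of squared norm `d`, a common classical action `B` satisfies `N * B i j ≤ d`. For
`N = d ^ 2` every entry is at most `1 / d`, and since rows sum to one, every entry equals `1 / d`.

Conversely, cyclically shifting the rows and columns of the unitary Fourier matrix
`d ^ (-1 / 2) * ζ ^ (i * j)`, with `ζ` a primitive `d`-th root of unity, gives `d ^ 2` pairwise
orthogonal unitaries with flat entries. For `d = 2` these are the four real Hadamard matrices that
have a single negative entry.
-/

section ClassicalAction

variable {n 𝕜 : Type*} [RCLike 𝕜]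

/-- The classical action of the channel `ρ ↦ U * ρ * Uᴴ`: the transition matrix `|U i j| ^ 2` that
it induces on diagonal states. -/
def classicalAction (U : Matrix n n 𝕜) : Matrix n n ℝ :=
  Matrix.of fun i j => ‖U i j‖ ^ 2

theorem classicalAction_apply (U : Matrix n n 𝕜) (i j : n) :
    classicalAction U i j = ‖U i j‖ ^ 2 :=
  rfl

theorem sum_classicalAction_row [Fintype n] [DecidableEq n] {U : Matrix n n 𝕜}
    (hU : U ∈ Matrix.unitaryGroup n 𝕜) (i : n) : ∑ j, classicalAction U i j = 1 := by
  have diag_eq_one : (U * star U) i i = 1 := by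
    rw [Matrix.mem_unitaryGroup_iff.mp hU, Matrix.one_apply_eq]
  simp only [Matrix.mul_apply, Matrix.star_apply, RCLike.star_def, RCLike.mul_conj] at diag_eq_one
  exact_mod_cast diag_eq_one

theorem classicalAction_eq_fin_two_iff (U : Matrix (Fin 2) (Fin 2) 𝕜) (a b c d : ℝ) :
    classicalAction U = !![a, b; c, d] ↔
      ‖U 0 0‖ ^ 2 = a ∧ ‖U 1 1‖ ^ 2 = d ∧ ‖U 0 1‖ ^ 2 = b ∧ ‖U 1 0‖ ^ 2 = c := by
  simp only [← Matrix.ext_iff, Fin.forall_fin_two, classicalAction_apply, Matrix.of_apply,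
    Matrix.cons_val_zero, Matrix.cons_val_one]
  tauto

end ClassicalAction

section Bessel

variable {ι m n 𝕜 : Type*} [Fintype ι] [Fintype m] [Fintype n] [RCLike 𝕜]

theorem inner_toLp_vec (A B : Matrix m n 𝕜) :
    inner 𝕜 (WithLp.toLp 2 A.vec) (WithLp.toLp 2 B.vec) = (Aᴴ * B).trace := by
  rw [EuclideanSpace.inner_toLp_toLp, dotProduct_comm, Matrix.star_vec_dotProduct_vec]

theorem sum_norm_sq_apply_le_of_trace_eq_ite [DecidableEq ι] {U : ι → Matrix m n 𝕜} {c : ℝ}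
    (hc : 0 < c) (hU : ∀ k l, ((U k)ᴴ * U l).trace = if k = l then (c : 𝕜) else 0)
    (i : m) (j : n) : ∑ k, ‖U k i j‖ ^ 2 ≤ c := by
  classical
  let v (k : ι) : EuclideanSpace 𝕜 (n × m) := (((√c)⁻¹ : ℝ) : 𝕜) • WithLp.toLp 2 (U k).vec
  have sq_scale : (√c)⁻¹ ^ 2 = c⁻¹ := by rw [inv_pow, Real.sq_sqrt hc.le]
  have orthonormal_v : Orthonormal 𝕜 v := by
    have normalized : (((√c)⁻¹ : ℝ) : 𝕜) * ((((√c)⁻¹ : ℝ) : 𝕜) * c) = 1 := by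
      rw [← mul_assoc, ← pow_two]
      exact_mod_cast (congrArg (· * c) sq_scale).trans (inv_mul_cancel₀ hc.ne')
    rw [orthonormal_iff_ite]
    intro k l
    simp only [v, inner_smul_left, inner_smul_right, inner_toLp_vec, hU, RCLike.conj_ofReal,
      mul_ite, mul_zero, normalized]
  have norm_sq_inner (k : ι) :
      ‖inner 𝕜 (v k) (EuclideanSpace.single (j, i) 1)‖ ^ 2 = c⁻¹ * ‖U k i j‖ ^ 2 := by
    rw [EuclideanSpace.inner_single_right, one_mul, RCLike.norm_conj, PiLp.smul_apply, norm_smul,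
      RCLike.norm_ofReal, mul_pow, sq_abs, sq_scale]
    rfl
  have bessel := orthonormal_v.sum_inner_products_le (s := Finset.univ)
    (EuclideanSpace.single (j, i) 1)
  simp only [norm_sq_inner, ← Finset.mul_sum, PiLp.norm_single, norm_one, one_pow]
    at bessel
  rwa [inv_mul_le_iff₀ hc, mul_one] at bessel

theorem card_mul_classicalAction_le [DecidableEq n] {U : ι → Matrix n n 𝕜} {B : Matrix n n ℝ}
    (hU : ∀ k, U k ∈ Matrix.unitaryGroup n 𝕜)
    (hB : ∀ k, classicalAction (U k) = B)
    (horth : Pairwise fun k l => ((U k)ᴴ * U l).trace = 0) (i j : n) :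
    Fintype.card ι * B i j ≤ Fintype.card n := by
  classical
  have : Nonempty n := ⟨i⟩
  have trace_eq (k l : ι) :
      ((U k)ᴴ * U l).trace = if k = l then ((Fintype.card n : ℝ) : 𝕜) else 0 := by
    split_ifs with hkl
    · rw [hkl, ← Matrix.star_eq_conjTranspose, Matrix.mem_unitaryGroup_iff'.mp (hU l),
        Matrix.trace_one, RCLike.ofReal_natCast]
    · exact horth hkl
  calc (Fintype.card ι * B i j : ℝ)
      = ∑ k, ‖U k i j‖ ^ 2 := by simp [← classicalAction_apply, hB]
    _ ≤ Fintype.card n :=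
      sum_norm_sq_apply_le_of_trace_eq_ite (by exact_mod_cast Fintype.card_pos) trace_eq i j

theorem common_classicalAction_eq_inv_card [DecidableEq n]
    (hι : Fintype.card ι = Fintype.card n ^ 2) {U : ι → Matrix n n 𝕜} {B : Matrix n n ℝ}
    (hU : ∀ k, U k ∈ Matrix.unitaryGroup n 𝕜) (hB : ∀ k, classicalAction (U k) = B)
    (horth : Pairwise fun k l => ((U k)ᴴ * U l).trace = 0) (i j : n) :
    B i j = (Fintype.card n : ℝ)⁻¹ := by
  have : Nonempty n := ⟨i⟩
  have card_pos : (0 : ℝ) < Fintype.card n := by exact_mod_cast Fintype.card_pos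
  have entry_le (j : n) : B i j ≤ (Fintype.card n : ℝ)⁻¹ := by
    have bound := card_mul_classicalAction_le hU hB horth i j
    rw [hι, Nat.cast_pow, pow_two, mul_assoc] at bound
    rw [← one_div, le_div_iff₀' card_pos]
    exact (mul_le_iff_le_one_right card_pos).mp bound
  have row_sum : ∑ j, B i j = ∑ _j : n, (Fintype.card n : ℝ)⁻¹ := by
    obtain ⟨k⟩ : Nonempty ι := Fintype.card_pos_iff.mp (hι ▸ pow_pos Fintype.card_pos 2)
    rw [← hB k, sum_classicalAction_row (hU k)]
    simp
  exact (Finset.sum_eq_sum_iff_of_le fun j _ => entry_le j).mp row_sum j (Finset.mem_univ j)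

end Bessel

section Fourier

variable {R : Type*} [CommRing R] [Fintype R]

/-- The Fourier matrix of a finite commutative ring with respect to the additive character `ψ`, with
row index shifted by `s.1` and column index by `s.2`. For primitive `ψ` the shifts form a
Hilbert–Schmidt orthogonal basis of unitaries with flat entries. -/
noncomputable def shiftedFourierMatrix (ψ : AddChar R ℂ) (s : R × R) : Matrix R R ℂ :=
  Matrix.of fun i j => ((√(Fintype.card R))⁻¹ : ℝ) * ψ ((i + s.1) * (j + s.2))

theorem classicalAction_shiftedFourierMatrix (ψ : AddChar R ℂ) (s : R × R) (i j : R) :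
    classicalAction (shiftedFourierMatrix ψ s) i j = (Fintype.card R : ℝ)⁻¹ := by
  simp [classicalAction_apply, shiftedFourierMatrix, AddChar.norm_apply]

theorem star_shiftedFourierMatrix_mul (ψ : AddChar R ℂ) (s t : R × R) (i j i' j' : R) :
    star (shiftedFourierMatrix ψ s i j) * shiftedFourierMatrix ψ t i' j' =
      (Fintype.card R : ℂ)⁻¹ * ψ ((i' + t.1) * (j' + t.2) - (i + s.1) * (j + s.2)) := by
  have sq_scale : (((√(Fintype.card R))⁻¹ : ℝ) : ℂ) ^ 2 = (Fintype.card R : ℂ)⁻¹ := by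
    rw [← Complex.ofReal_pow, inv_pow, Real.sq_sqrt (Nat.cast_nonneg _), Complex.ofReal_inv,
      Complex.ofReal_natCast]
  rw [sub_eq_add_neg, AddChar.map_add_eq_mul, AddChar.map_neg_eq_conj, ← sq_scale]
  simp only [shiftedFourierMatrix, Matrix.of_apply, RCLike.star_def, map_mul, Complex.conj_ofReal]
  ring

theorem shiftedFourierMatrix_mem_unitaryGroup [DecidableEq R] {ψ : AddChar R ℂ}
    (hψ : ψ.IsPrimitive) (s : R × R) :
    shiftedFourierMatrix ψ s ∈ Matrix.unitaryGroup R ℂ := by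
  rw [Matrix.mem_unitaryGroup_iff']
  ext j j'
  have phase (i : R) :
      (i + s.1) * (j' + s.2) - (i + s.1) * (j + s.2) = (i + s.1) * (j' - j) := by ring
  have sum_phase : ∑ i, ψ ((i + s.1) * (j' - j)) = ∑ i, ψ (i * (j' - j)) :=
    Equiv.sum_comp (Equiv.addRight s.1) fun i => ψ (i * (j' - j))
  simp only [Matrix.mul_apply, Matrix.star_apply, star_shiftedFourierMatrix_mul, phase,
    ← Finset.mul_sum, sum_phase, AddChar.sum_mulShift _ hψ, sub_eq_zero, Matrix.one_apply,
    eq_comm (a := j')]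
  split_ifs <;> simp

theorem trace_shiftedFourierMatrix_mul_eq_zero {ψ : AddChar R ℂ} (hψ : ψ.IsPrimitive) {s t : R × R}
    (hst : s ≠ t) : ((shiftedFourierMatrix ψ s)ᴴ * shiftedFourierMatrix ψ t).trace = 0 := by
  classical
  have phase (i j : R) : (i + t.1) * (j + t.2) - (i + s.1) * (j + s.2) =
      i * (t.2 - s.2) + j * (t.1 - s.1) + (t.1 * t.2 - s.1 * s.2) := by ring
  have shift_ne : t.2 - s.2 ≠ 0 ∨ t.1 - s.1 ≠ 0 := by
    contrapose! hst
    exact Prod.ext (sub_eq_zero.mp hst.2).symm (sub_eq_zero.mp hst.1).symm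
  calc ((shiftedFourierMatrix ψ s)ᴴ * shiftedFourierMatrix ψ t).trace
      = (Fintype.card R : ℂ)⁻¹ * ((∑ j, ψ (j * (t.1 - s.1))) * ∑ i, ψ (i * (t.2 - s.2))) *
          ψ (t.1 * t.2 - s.1 * s.2) := by
        rw [Finset.sum_mul_sum]
        simp only [Matrix.trace, Matrix.diag_apply, Matrix.mul_apply, Matrix.conjTranspose_apply,
          star_shiftedFourierMatrix_mul, phase, AddChar.map_add_eq_mul, Finset.mul_sum,
          Finset.sum_mul]
        refine Finset.sum_congr rfl fun j _ => Finset.sum_congr rfl fun i _ => ?_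
        ring
    _ = 0 := by
        rw [AddChar.sum_mulShift _ hψ, AddChar.sum_mulShift _ hψ]
        rcases shift_ne with h | h <;> simp [h]

end Fourier

section Reindex

variable {m n : Type*} [Fintype m] [Fintype n]

theorem conjTranspose_mul_submatrix_equiv {α : Type*} [NonUnitalNonAssocSemiring α] [Star α]
    (A B : Matrix n n α) (e : m ≃ n) :
    (A.submatrix e e)ᴴ * B.submatrix e e = (Aᴴ * B).submatrix e e := by
  rw [Matrix.conjTranspose_submatrix, Matrix.submatrix_mul_equiv]

theorem submatrix_equiv_mem_unitaryGroup [DecidableEq m] [DecidableEq n] {α : Type*} [CommRing α]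
    [StarRing α] {A : Matrix n n α} (hA : A ∈ Matrix.unitaryGroup n α) (e : m ≃ n) :
    A.submatrix e e ∈ Matrix.unitaryGroup m α := by
  rw [Matrix.mem_unitaryGroup_iff', Matrix.star_eq_conjTranspose] at hA ⊢
  rw [conjTranspose_mul_submatrix_equiv, hA, Matrix.submatrix_one_equiv]

theorem trace_submatrix_equiv {α : Type*} [AddCommMonoid α] (A : Matrix n n α) (e : m ≃ n) :
    (A.submatrix e e).trace = A.trace :=
  e.sum_comp fun i => A i i

end Reindex

theorem exists_orthogonal_unitaries_classicalAction_eq_inv_card {ι n : Type*} [Fintype ι]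
    [Fintype n] [DecidableEq n] (hι : Fintype.card ι = Fintype.card n ^ 2) :
    ∃ U : ι → Matrix n n ℂ, (∀ k, U k ∈ Matrix.unitaryGroup n ℂ) ∧
      (∀ k i j, classicalAction (U k) i j = (Fintype.card n : ℝ)⁻¹) ∧
      Pairwise fun k l => ((U k)ᴴ * U l).trace = 0 := by
  rcases isEmpty_or_nonempty n with _ | _
  · exact ⟨1, fun _ => one_mem _, fun _ i => isEmptyElim i,
      fun _ _ _ => Matrix.trace_eq_zero_of_isEmpty _⟩
  let d := Fintype.card n
  have : NeZero d := ⟨Fintype.card_ne_zero⟩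
  have primitive := ZMod.isPrimitive_stdAddChar d
  let e : n ≃ ZMod d := Fintype.equivOfCardEq (ZMod.card d).symm
  let shift : ι ≃ ZMod d × ZMod d :=
    Fintype.equivOfCardEq (by rw [hι, Fintype.card_prod, ZMod.card, pow_two])
  refine ⟨fun k => (shiftedFourierMatrix ZMod.stdAddChar (shift k)).submatrix e e,
    fun k => submatrix_equiv_mem_unitaryGroup
      (shiftedFourierMatrix_mem_unitaryGroup primitive (shift k)) e,
    fun k i j => ?_, fun k l hkl => ?_⟩
  · exact (classicalAction_shiftedFourierMatrix _ (shift k) (e i) (e j)).trans (by rw [ZMod.card])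
  · beta_reduce
    rw [conjTranspose_mul_submatrix_equiv, trace_submatrix_equiv]
    exact trace_shiftedFourierMatrix_mul_eq_zero primitive (shift.injective.ne hkl)

theorem stmt_18_general {ι n : Type*} [Fintype ι] [Fintype n] [DecidableEq n]
    (hι : Fintype.card ι = Fintype.card n ^ 2) (B : Matrix n n ℝ) :
    (∃ U : ι → Matrix n n ℂ, (∀ k, U k ∈ Matrix.unitaryGroup n ℂ) ∧
      (∀ k, classicalAction (U k) = B) ∧ Pairwise fun k l => ((U k)ᴴ * U l).trace = 0) ↔
    ∀ i j, B i j = (Fintype.card n : ℝ)⁻¹ := by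
  constructor
  · rintro ⟨U, hU, hB, horth⟩
    exact common_classicalAction_eq_inv_card hι hU hB horth
  · intro hB
    obtain ⟨U, hU, hflat, horth⟩ := exists_orthogonal_unitaries_classicalAction_eq_inv_card hι
    exact ⟨U, hU, fun k => Matrix.ext fun i j => (hflat k i j).trans (hB i j).symm, horth⟩

theorem forall_apply_eq_inv_card_fin_two_iff (a : ℝ) :
    (∀ i j, !![a, 1 - a; 1 - a, a] i j = (Fintype.card (Fin 2) : ℝ)⁻¹) ↔ a = 1 / 2 := by
  simp only [Fin.forall_fin_two, Matrix.of_apply, Matrix.cons_val_zero, Matrix.cons_val_one,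
    Fintype.card_fin, Nat.cast_ofNat]
  constructor
  · rintro ⟨⟨h, -⟩, -⟩
    rw [h, one_div]
  · rintro rfl
    norm_num

theorem stmt_18 (a : ℝ) (ha0 : 0 ≤ a) (ha1 : a ≤ 1) :
    (∃ U : Fin 4 → Matrix (Fin 2) (Fin 2) ℂ,
      (∀ n, U n ∈ Matrix.unitaryGroup (Fin 2) ℂ) ∧
      (∀ n, ‖U n 0 0‖ ^ 2 = a ∧ ‖U n 1 1‖ ^ 2 = a ∧
            ‖U n 0 1‖ ^ 2 = 1 - a ∧ ‖U n 1 0‖ ^ 2 = 1 - a) ∧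
      (∀ m n : Fin 4, m ≠ n → ((U m)ᴴ * U n).trace = 0)) ↔
    a = 1 / 2 := by
  simpa only [classicalAction_eq_fin_two_iff, forall_apply_eq_inv_card_fin_two_iff,
    Pairwise] using
    stmt_18_general (ι := Fin 4) rfl !![a, 1 - a; 1 - a, a]
end

section
/- Let p be an odd prime, set d = p − 1, and let U be a d×d unitary matrix with |Uᵢⱼ|² = 2/p when i = j and |Uᵢⱼ|² = 1/p when i ≠ j (so the classical action of U is T = (W + 𝟙)/p with W the all-ones matrix). For k ∈ {0, 1, …, p−1} let E⁽ᵏ⁾ be the d×d diagonal unitary with entries E⁽ᵏ⁾ⱼⱼ = exp(2πi·j·k/p) for j ∈ {0,…,d−1}, and set M⁽ᵏ⁾ = E⁽ᵏ⁾ U E⁽ᵏ⁾. Then the p unitaries M⁽⁰⁾, …, M⁽ᵖ⁻¹⁾ are pairwise Hilbert–Schmidt orthogonal: Tr((M⁽ˡ⁾)† M⁽ᵏ⁾) = 0 for all k ≠ l. (Whenever T = (W+𝟙)/p is unistochastic this exhibits d + 1 perfectly distinguishable unitary channels with the same classical action T.) -/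
open scoped Matrix

/-!
Multiplying `U` on both sides by diagonal phases turns the Hilbert–Schmidt inner product into a
quadratic form of the classical action `T`: with `D = diag(1, y, …)` and `E = diag(1, z, …)` for
distinct `p`-th roots of unity `y` and `z`, and with `w = y⁻¹ z`, one has
`Tr((D U D)ᴴ (E U E)) = vᵀ T v`, where `v = (1, w, …, w ^ (p - 2))`. For `T = (W + 1) / p` this is
`((∑ wʲ)² + ∑ w²ʲ) / p`. The two sums miss only the last term of a full period, so they equal
`-w ^ (p - 1)` and `-w ^ (2 (p - 1))`, the second one because `w² ≠ 1` for odd `p`; the square of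
the first cancels the second.
-/

open Matrix

theorem trace_conjTranspose_diagonal_mul_mul_diagonal {m n α : Type*} [Fintype m] [Fintype n]
    [DecidableEq m] [DecidableEq n] [CommSemiring α] [StarRing α]
    (A B : Matrix m n α) (a a' : m → α) (b b' : n → α) :
    ((diagonal a * A * diagonal b)ᴴ * (diagonal a' * B * diagonal b')).trace =
      (star a * a') ᵥ* (B ⊙ A.map star) ⬝ᵥ (star b * b') := by
  have hleft : diagonal (star a * a') = diagonal (star a) * diagonal a' :=
    (diagonal_mul_diagonal' _ _).symm
  have hright : diagonal (star b * b') = diagonal b' * diagonal (star b) := by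
    rw [mul_comm]
    exact (diagonal_mul_diagonal' _ _).symm
  have htranspose : (A.map star)ᵀ = Aᴴ := rfl
  calc ((diagonal a * A * diagonal b)ᴴ * (diagonal a' * B * diagonal b')).trace
    _ = ((diagonal (star b) * Aᴴ) *
          (diagonal (star a) * diagonal a' * B * diagonal b')).trace := by
      simp only [conjTranspose_mul, diagonal_conjTranspose, Matrix.mul_assoc]
    _ = ((diagonal (star a) * diagonal a' * B) *
          (diagonal b' * diagonal (star b) * Aᴴ)).trace := by
      rw [trace_mul_comm]
      simp only [Matrix.mul_assoc]
    _ = (star a * a') ᵥ* (B ⊙ A.map star) ⬝ᵥ (star b * b') := by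
      rw [dotProduct_vecMul_hadamard, transpose_mul, diagonal_transpose, htranspose, hleft, hright]

theorem vecMul_smul_vecMulVec_one_add_one_dotProduct {n α : Type*} [Fintype n] [DecidableEq n]
    [CommSemiring α] (r : α) (v w : n → α) :
    v ᵥ* (r • (vecMulVec 1 1 + 1)) ⬝ᵥ w = r * ((∑ i, v i) * ∑ i, w i + v ⬝ᵥ w) := by
  rw [vecMul_smul, smul_dotProduct, vecMul_add, vecMul_one, add_dotProduct, vecMul_vecMulVec,
    smul_dotProduct, dotProduct_one, one_dotProduct, smul_eq_mul, smul_eq_mul]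

theorem hadamard_map_star_self_eq {n 𝕜 : Type*} [DecidableEq n] [RCLike 𝕜] {U : Matrix n n 𝕜}
    {r : ℝ} (hU : ∀ i j, ‖U i j‖ ^ 2 = if i = j then 2 / r else 1 / r) :
    U ⊙ U.map star = (r : 𝕜)⁻¹ • (vecMulVec 1 1 + 1) := by
  ext i j
  have hentry : U i j * star (U i j) = ((‖U i j‖ ^ 2 : ℝ) : 𝕜) := by
    rw [← starRingEnd_apply, RCLike.mul_conj, RCLike.ofReal_pow]
  rw [hadamard_apply, map_apply, hentry, hU]
  by_cases hij : i = j
  · simp [hij, div_eq_inv_mul, one_add_one_eq_two, map_ofNat (algebraMap ℝ 𝕜) 2]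
  · simp [hij]

section GeometricSum

variable {R : Type*} [Ring R] [NoZeroDivisors R] {w : R} {n : ℕ}

theorem sum_fin_pow_eq_neg_pow (hw : w ^ (n + 1) = 1) (hne : w ≠ 1) :
    ∑ i : Fin n, w ^ (i : ℕ) = -w ^ n := by
  have hfull : ∑ i ∈ Finset.range (n + 1), w ^ i = 0 := by
    refine (mul_eq_zero.mp ?_).resolve_right (sub_ne_zero.mpr hne)
    rw [geom_sum_mul, hw, sub_self]
  rw [Fin.sum_univ_eq_sum_range (w ^ ·)]
  rw [Finset.sum_range_succ] at hfull
  exact eq_neg_of_add_eq_zero_left hfull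

theorem sq_sum_fin_pow_add_sum_fin_sq_pow_eq_zero (hw : w ^ (n + 1) = 1) (hsq : w ^ 2 ≠ 1) :
    (∑ i : Fin n, w ^ (i : ℕ)) ^ 2 + ∑ i : Fin n, (w ^ 2) ^ (i : ℕ) = 0 := by
  have hne : w ≠ 1 := fun h => hsq (by rw [h, one_pow])
  have hw2 : (w ^ 2) ^ (n + 1) = 1 := by rw [pow_right_comm, hw, one_pow]
  rw [sum_fin_pow_eq_neg_pow hw hne, sum_fin_pow_eq_neg_pow hw2 hsq, neg_sq, pow_right_comm,
    add_neg_cancel]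

end GeometricSum

theorem sq_ne_one_of_odd_of_pow_eq_one {M : Type*} [Monoid M] {w : M} {p : ℕ} (hodd : Odd p)
    (hw : w ^ p = 1) (hne : w ≠ 1) : w ^ 2 ≠ 1 := fun hsq =>
  hne <| by simpa [Nat.coprime_two_left.mpr hodd] using pow_gcd_eq_one.mpr ⟨hsq, hw⟩

/-- The diagonal phase matrix `diag(1, z, …, z ^ (n - 1))`, parametrized by the base `z` of its
phases: the matrix `E⁽ᵏ⁾` is the case `z = exp (2πik/p)`. -/
def powDiagonal {α : Type*} [MonoidWithZero α] (n : ℕ) (z : α) : Matrix (Fin n) (Fin n) α :=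
  diagonal fun j => z ^ (j : ℕ)

theorem trace_conjTranspose_powDiagonal_mul_mul_powDiagonal {α : Type*} [CommSemiring α]
    [StarRing α] {n : ℕ} (A B : Matrix (Fin n) (Fin n) α) (y z : α) :
    ((powDiagonal n y * A * powDiagonal n y)ᴴ * (powDiagonal n z * B * powDiagonal n z)).trace =
      (fun j : Fin n => (star y * z) ^ (j : ℕ)) ᵥ* (B ⊙ A.map star) ⬝ᵥ
        fun j : Fin n => (star y * z) ^ (j : ℕ) := by
  have hphase : (star fun j : Fin n => y ^ (j : ℕ)) * (fun j : Fin n => z ^ (j : ℕ)) =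
      fun j : Fin n => (star y * z) ^ (j : ℕ) := by
    ext j
    rw [Pi.mul_apply, Pi.star_apply, star_pow, mul_pow]
  simp only [powDiagonal, trace_conjTranspose_diagonal_mul_mul_diagonal, hphase]

theorem star_mul_ne_one_of_pow_eq_one {y z : ℂ} {p : ℕ} (hp : p ≠ 0) (hy : y ^ p = 1)
    (hyz : y ≠ z) : star y * z ≠ 1 := by
  have hstar : star y = y⁻¹ :=
    (Complex.inv_eq_conj (Complex.norm_eq_one_of_pow_eq_one hy hp)).symm
  have hy0 : y ≠ 0 := (IsUnit.of_pow_eq_one hy hp).ne_zero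
  rwa [hstar, Ne, inv_mul_eq_one₀ hy0]

theorem trace_conjTranspose_powDiagonal_mul_mul_powDiagonal_eq_zero {p : ℕ} (hodd : Odd p)
    {U : Matrix (Fin (p - 1)) (Fin (p - 1)) ℂ}
    (hmod : ∀ i j, ‖U i j‖ ^ 2 = if i = j then 2 / (p : ℝ) else 1 / (p : ℝ))
    {y z : ℂ} (hy : y ^ p = 1) (hz : z ^ p = 1) (hyz : y ≠ z) :
    ((powDiagonal (p - 1) y * U * powDiagonal (p - 1) y)ᴴ *
      (powDiagonal (p - 1) z * U * powDiagonal (p - 1) z)).trace = 0 := by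
  set w := star y * z with hw_def
  have hw : w ^ p = 1 := by rw [hw_def, mul_pow, ← star_pow, hy, hz, star_one, one_mul]
  have hsq : w ^ 2 ≠ 1 := sq_ne_one_of_odd_of_pow_eq_one hodd hw
    (star_mul_ne_one_of_pow_eq_one hodd.pos.ne' hy hyz)
  have hcancel := sq_sum_fin_pow_add_sum_fin_sq_pow_eq_zero
    (n := p - 1) (by rwa [Nat.sub_add_cancel hodd.pos]) hsq
  have hdot : (fun j : Fin (p - 1) => w ^ (j : ℕ)) ⬝ᵥ (fun j => w ^ (j : ℕ)) =
      ∑ j : Fin (p - 1), (w ^ 2) ^ (j : ℕ) :=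
    Finset.sum_congr rfl fun j _ => by rw [← sq, pow_right_comm]
  rw [trace_conjTranspose_powDiagonal_mul_mul_powDiagonal, hadamard_map_star_self_eq hmod,
    vecMul_smul_vecMulVec_one_add_one_dotProduct, ← hw_def, hdot, ← sq, hcancel, mul_zero]

theorem diagonal_exp_eq_powDiagonal (n p k : ℕ) :
    (diagonal fun j : Fin n => Complex.exp (2 * Real.pi * Complex.I * (j : ℕ) * k / p)) =
      powDiagonal n (Complex.exp (2 * Real.pi * Complex.I / p) ^ k) := by
  simp only [powDiagonal, ← Complex.exp_nat_mul]
  congr! 3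
  ring

theorem stmt_19_general (p : ℕ) (hodd : Odd p)
    (U : Matrix (Fin (p - 1)) (Fin (p - 1)) ℂ)
    (hmod : ∀ i j : Fin (p - 1),
      ‖U i j‖ ^ 2 = if i = j then 2 / (p : ℝ) else 1 / (p : ℝ))
    (E : Fin p → Matrix (Fin (p - 1)) (Fin (p - 1)) ℂ)
    (hE : ∀ k : Fin p, E k = diagonal fun j : Fin (p - 1) =>
      Complex.exp (2 * Real.pi * Complex.I * (j : ℕ) * (k : ℕ) / p)) :
    ∀ k l : Fin p, k ≠ l →
      ((E l * U * E l)ᴴ * (E k * U * E k)).trace = 0 := by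
  intro k l hkl
  have hζ := Complex.isPrimitiveRoot_exp p hodd.pos.ne'
  have hroot (m : ℕ) : (Complex.exp (2 * Real.pi * Complex.I / p) ^ m) ^ p = 1 := by
    rw [pow_right_comm, hζ.pow_eq_one, one_pow]
  rw [hE, hE, diagonal_exp_eq_powDiagonal, diagonal_exp_eq_powDiagonal]
  exact trace_conjTranspose_powDiagonal_mul_mul_powDiagonal_eq_zero hodd hmod (hroot l) (hroot k)
    fun h => hkl (Fin.ext (hζ.pow_inj l.2 k.2 h)).symm

theorem stmt_19 (p : ℕ) (hp : p.Prime) (hodd : Odd p)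
    (U : Matrix (Fin (p - 1)) (Fin (p - 1)) ℂ)
    (hU : U ∈ Matrix.unitaryGroup (Fin (p - 1)) ℂ)
    (hmod : ∀ i j : Fin (p - 1),
      ‖U i j‖ ^ 2 = if i = j then 2 / (p : ℝ) else 1 / (p : ℝ))
    (E : Fin p → Matrix (Fin (p - 1)) (Fin (p - 1)) ℂ)
    (hE : ∀ k : Fin p, E k = Matrix.diagonal fun j : Fin (p - 1) =>
      Complex.exp (2 * Real.pi * Complex.I * (j : ℕ) * (k : ℕ) / p)) :
    ∀ k l : Fin p, k ≠ l →
      ((E l * U * E l)ᴴ * (E k * U * E k)).trace = 0 :=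
  stmt_19_general p hodd U hmod E hE
end
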